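/- arXiv:math/0410203 — 8 statements merged into one kernel-verified Lean document; each statement's English description precedes it below -/
import Mathlib

section
/- Let x be a real number with |x| < 1, let d be a natural number, let P ∈ ℝ[X] be a polynomial of degree at most d, and let a be a natural number. Then the family (P(n)·x^n)_{n ≥ a} is summable, and ∑_{n ≥ a} P(n) x^n = ∑_{i=0}^{d} (Δ^i P)(a) · x^{a+i} / (1 − x)^{i+1}, where Δ is the forward difference operator (ΔQ)(X) = Q(X+1) − Q(X) and Δ^i is its i-th iterate (with Δ^0 Q = Q). -/
/-- The forward difference operator on polynomials: `(ΔQ)(X) = Q(X+1) - Q(X)`. -/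
noncomputable def polyFwdDiff (Q : Polynomial ℝ) : Polynomial ℝ :=
  Q.comp (Polynomial.X + 1) - Q

theorem polyFwdDiff_iter_eval (P : Polynomial ℝ) (i : ℕ) :
    (fun y : ℝ => (polyFwdDiff^[i] P).eval y) = (fwdDiff (1:ℝ))^[i] (fun y => P.eval y) := by
  induction i with
  | zero => rfl
  | succ k ih =>
    rw [Function.iterate_succ_apply', Function.iterate_succ_apply', ← ih]
    funext y
    simp [polyFwdDiff, fwdDiff]

theorem hasSum_choose_shift (x : ℝ) (hx : |x| < 1) (i : ℕ) :
    HasSum (fun m : ℕ => (m.choose i : ℝ) * x ^ m) (x ^ i / (1 - x) ^ (i + 1)) := by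
  have h := (hasSum_choose_mul_geometric_of_norm_lt_one i (r := x)
    (by simpa using hx)).mul_left (x ^ i)
  rw [← hasSum_nat_add_iff' i, Finset.sum_eq_zero, sub_zero]
  · convert! h using 1
    · funext n
      ring
    · ring
  · intro j hj
    rw [Nat.choose_eq_zero_of_lt (Finset.mem_range.1 hj)]
    simp

theorem newton_eval (d : ℕ) (P : Polynomial ℝ) (hP : P.natDegree ≤ d) (a m : ℕ) :
    P.eval ((a + m : ℕ) : ℝ) = ∑ i ∈ Finset.range (d + 1),
      (polyFwdDiff^[i] P).eval (a : ℝ) * (m.choose i : ℝ) := by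
  have h := shift_eq_sum_fwdDiff_iter (1:ℝ) (fun y => P.eval y) m (a : ℝ)
  simp only [nsmul_eq_mul, mul_one] at h
  rw [Nat.cast_add, h]
  have e : ∀ i, (fwdDiff (1:ℝ))^[i] (fun y => P.eval y) (a : ℝ)
      = (polyFwdDiff^[i] P).eval (a : ℝ) := fun i =>
    (congrFun (polyFwdDiff_iter_eval P i) (a : ℝ)).symm
  simp only [e]
  have h1 : ∀ N, m + 1 ≤ N → ∑ i ∈ Finset.range (m + 1),
      (m.choose i : ℝ) * (polyFwdDiff^[i] P).eval (a : ℝ) = ∑ i ∈ Finset.range N,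
      (polyFwdDiff^[i] P).eval (a : ℝ) * (m.choose i : ℝ) := by
    intro N hN
    rw [Finset.sum_congr rfl (fun i _ => mul_comm _ _)]
    refine Finset.sum_subset (Finset.range_mono hN) fun i _ hi => ?_
    rw [Nat.choose_eq_zero_of_lt (by simpa using hi)]
    simp
  rw [h1 (max (m + 1) (d + 1)) (le_max_left _ _)]
  symm
  refine Finset.sum_subset (Finset.range_mono (le_max_right _ _)) fun i _ hi => ?_
  have hi' : P.natDegree < i := by
    have : d + 1 ≤ i := by simpa using hi
    omega
  rw [← e i]
  have z := congrFun (Polynomial.fwdDiff_iter_eq_zero_of_degree_lt hi') (a : ℝ)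
  simp only [Pi.zero_apply] at z
  exact mul_eq_zero_of_left z _

/-- For a real number `x` with `|x| < 1`, a real polynomial `P` of degree at most `d`,
and a natural number `a`, the family `(P(n) xⁿ)_{n ≥ a}` is summable and
`∑_{n ≥ a} P(n) xⁿ = ∑_{i=0}^{d} (Δⁱ P)(a) · x^(a+i) / (1-x)^(i+1)`. -/
theorem stmt1 (x : ℝ) (hx : |x| < 1) (d : ℕ) (P : Polynomial ℝ) (hP : P.natDegree ≤ d)
    (a : ℕ) :
    Summable (fun n : {n : ℕ // a ≤ n} => P.eval ((n : ℕ) : ℝ) * x ^ (n : ℕ)) ∧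
    ∑' n : {n : ℕ // a ≤ n}, P.eval ((n : ℕ) : ℝ) * x ^ (n : ℕ)
      = ∑ i ∈ Finset.range (d + 1),
          (polyFwdDiff^[i] P).eval (a : ℝ) * x ^ (a + i) / (1 - x) ^ (i + 1) := by
  let e : ℕ ≃ {n : ℕ // a ≤ n} :=
    { toFun := fun m => ⟨a + m, Nat.le_add_right a m⟩
      invFun := fun n => n.1 - a
      left_inv := fun m => by simp
      right_inv := fun n => Subtype.ext (by have := n.2; simp only []; omega) }
  have key : HasSum (fun n : {n : ℕ // a ≤ n} => P.eval ((n : ℕ) : ℝ) * x ^ (n : ℕ))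
      (∑ i ∈ Finset.range (d + 1),
          (polyFwdDiff^[i] P).eval (a : ℝ) * x ^ (a + i) / (1 - x) ^ (i + 1)) := by
    rw [← e.hasSum_iff]
    have h := hasSum_sum (s := Finset.range (d + 1)) fun i _ =>
      (hasSum_choose_shift x hx i).mul_left ((polyFwdDiff^[i] P).eval (a : ℝ) * x ^ a)
    convert! h using 1
    · funext m
      change P.eval ((a + m : ℕ) : ℝ) * x ^ (a + m) = _
      rw [newton_eval d P hP, Finset.sum_mul]
      exact Finset.sum_congr rfl fun i _ => by ring
    · exact Finset.sum_congr rfl fun i _ => by ring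
  exact ⟨key.summable, key.tsum_eq⟩
end

section
/- Let b be a natural number and let n, c be integers with 0 ≤ c < n. Then for every r ∈ {0, 1, …, n−1} there exists a polynomial Q_r ∈ ℚ[X] of degree at most b+1 such that for every natural number a with a ≡ r (mod n), ∑_{0 ≤ i ≤ a, i ≡ c (mod n)} i^b = Q_r(a). -/
open Polynomial in
/-- For every rational step `n ≠ 0` there is a polynomial `P` of degree at most `b + 1`
with `P (x + n) = P x + x ^ b`. -/
lemma exists_antidiff (b : ℕ) (n : ℚ) (hn : n ≠ 0) :
    ∃ P : Polynomial ℚ, P.natDegree ≤ b + 1 ∧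
      ∀ x : ℚ, P.eval (x + n) = P.eval x + x ^ b := by
  have hb : (Polynomial.bernoulli (b + 1)).natDegree ≤ b + 1 := by
    rw [Polynomial.natDegree_le_iff_coeff_eq_zero]
    intro N hN
    rw [Polynomial.coeff_bernoulli]
    simp [not_le.mpr hN]
  refine ⟨C (n ^ b / (b + 1)) * (Polynomial.bernoulli (b + 1)).comp (C n⁻¹ * X), ?_, ?_⟩
  · refine (natDegree_C_mul_le _ _).trans (natDegree_comp_le.trans ?_)
    have h1 : (C n⁻¹ * X : Polynomial ℚ).natDegree ≤ 1 :=
      (natDegree_C_mul_le _ _).trans natDegree_X_le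
    calc _ ≤ (b + 1) * 1 := Nat.mul_le_mul hb h1
      _ = b + 1 := by ring
  · intro x
    have h := Polynomial.bernoulli_eval_one_add (b + 1) (n⁻¹ * x)
    have e : n⁻¹ * (x + n) = 1 + n⁻¹ * x := by field_simp; ring
    have hb' : (b : ℚ) + 1 ≠ 0 := by positivity
    simp only [eval_mul, eval_C, eval_comp, eval_X, e, h]
    simp only [Nat.add_sub_cancel, mul_pow, inv_pow]
    push_cast
    field_simp

/-- The shift from `a` to the next integer congruent to `c`. -/
lemma emod_step (n c a : ℤ) (hc : 0 ≤ c) (hcn : c < n) :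
    (a % n = c → (c - a) % n = 0 ∧ (c - (a + 1)) % n = n - 1) ∧
    (a % n ≠ c → (c - (a + 1)) % n = (c - a) % n - 1) := by
  have hn : 0 < n := by omega
  have h0 := Int.emod_nonneg (c - a) hn.ne'
  have h1 := Int.emod_lt_of_pos (c - a) hn
  have h2 := Int.emod_add_mul_ediv (c - a) n
  constructor
  · intro h
    have hz : (c - a) % n = 0 := by
      apply Int.emod_eq_emod_iff_emod_sub_eq_zero.1
      rw [h, Int.emod_eq_of_lt hc hcn]
    refine ⟨hz, ?_⟩
    have := (Int.ediv_emod_unique (a := c - (a + 1)) (r := n - 1) (q := (c - a) / n - 1) hn).2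
      ⟨by linarith [mul_sub n ((c - a) / n) 1], by omega, by omega⟩
    exact this.2
  · intro h
    have hz : (c - a) % n ≠ 0 := by
      intro hz
      apply h
      have : c % n = a % n := Int.emod_eq_emod_iff_emod_sub_eq_zero.2 hz
      rw [← this, Int.emod_eq_of_lt hc hcn]
    exact ((Int.ediv_emod_unique (a := c - (a + 1)) (r := (c - a) % n - 1)
      (q := (c - a) / n) hn).2 ⟨by linarith, by omega, by omega⟩).2

/-- For natural `b` and integers `0 ≤ c < n`, and for each residue `r` with `0 ≤ r < n`,
there is a polynomial `Q_r ∈ ℚ[X]` of degree at most `b + 1` such that for every natural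
number `a ≡ r (mod n)`, `∑_{0 ≤ i ≤ a, i ≡ c (mod n)} i^b = Q_r(a)`. -/
theorem stmt2 (b : ℕ) (n c : ℤ) (hc : 0 ≤ c) (hcn : c < n) :
    ∀ r : ℤ, 0 ≤ r → r < n →
      ∃ Q : Polynomial ℚ, Q.natDegree ≤ b + 1 ∧
        ∀ a : ℕ, (a : ℤ) % n = r →
          (∑ i ∈ Finset.range (a + 1), if (i : ℤ) % n = c then (i : ℚ) ^ b else 0)
            = Q.eval (a : ℚ) := by
  intro r hr hrn
  have hn : 0 < n := by omega
  have hnq : (n : ℚ) ≠ 0 := by exact_mod_cast hn.ne'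
  obtain ⟨P, hP, hstep⟩ := exists_antidiff b n hnq
  have key : ∀ a : ℕ,
      (∑ i ∈ Finset.range a, if (i : ℤ) % n = c then (i : ℚ) ^ b else 0)
        = P.eval ((a : ℚ) + (((c - a) % n : ℤ) : ℚ)) - P.eval (c : ℚ) := by
    intro a
    induction a with
    | zero => simp [Int.emod_eq_of_lt hc hcn]
    | succ a ih =>
      rw [Finset.sum_range_succ, ih]
      obtain ⟨s1, s2⟩ := emod_step n c a hc hcn
      by_cases h : (a : ℤ) % n = c
      · obtain ⟨e1, e2⟩ := s1 h
        rw [if_pos h]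
        push_cast
        rw [e1, e2]
        have := hstep a
        push_cast
        rw [show (a : ℚ) + 1 + (n - 1) = a + n by ring, this, add_zero]
        ring
      · have e := s2 h
        rw [if_neg h]
        push_cast
        rw [e]
        push_cast
        rw [show ∀ t : ℚ, (a : ℚ) + 1 + (t - 1) = a + t by intro t; ring]
        ring
  refine ⟨P.comp (Polynomial.X + Polynomial.C (1 + (((c - (r + 1)) % n : ℤ) : ℚ)))
    - Polynomial.C (P.eval (c : ℚ)), ?_, ?_⟩
  · rw [Polynomial.natDegree_sub_C, Polynomial.natDegree_comp, Polynomial.natDegree_X_add_C]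
    simpa using hP
  · intro a ha
    have e : (c - ((a + 1 : ℕ) : ℤ)) % n = (c - (r + 1)) % n := by
      apply Int.emod_eq_emod_iff_emod_sub_eq_zero.2
      apply Int.emod_eq_zero_of_dvd
      have := Int.emod_add_mul_ediv (a : ℤ) n
      exact ⟨-((a : ℤ) / n), by push_cast; linarith [mul_neg n ((a : ℤ) / n)]⟩
    rw [key, e]
    simp [Polynomial.eval_comp, add_assoc]
end

section
/- Let K be a field of characteristic zero, and let f be a strictly analytic function on a ball B = c + t^β K[[t]] of K((t)), given by f(c+y) = ∑_{i∈ℕ} a_i y^i. Suppose there exists α ∈ ℤ such that ord(f'(x)) = α for every x ∈ B (in particular f'(x) ≠ 0 on B). Then the image f(B) is contained in the ball f(c) + t^{α+β} K[[t]] — equivalently, for all x, y ∈ B with f(x) ≠ f(y), ord(f(x) − f(y)) ≥ α + β — but f(B) is not contained in d + t^{α+β+1} K[[t]] for any d ∈ K((t)). -/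
/-- The `t`-adic order of a Laurent series (with the convention `ord 0 = 0`). -/
noncomputable def ord {K : Type*} [Field K] (x : LaurentSeries K) : ℤ := x.order

/-- The angular component of a Laurent series: the coefficient of `t^(ord x)`
(so `ac 0 = 0`). -/
noncomputable def ac {K : Type*} [Field K] (x : LaurentSeries K) : K := x.coeff x.order

/-- The ball `c + t^γ K[[t]] = {x : x = c ∨ ord (x - c) ≥ γ}` in `K((t))`. -/
def ball {K : Type*} [Field K] (c : LaurentSeries K) (γ : ℤ) : Set (LaurentSeries K) :=
  {x | x = c ∨ γ ≤ ord (x - c)}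

open Filter Topology in
/-- A family whose terms have orders tending to infinity is summable in `K((t))`. -/
theorem aux_summable {K : Type*} [Field K] (s : ℕ → LaurentSeries K)
    (hs : ∀ N : ℤ, ∃ I : ℕ, ∀ i ≥ I, ∀ m < N, (s i).coeff m = 0) : Summable s := by
  have : NonarchimedeanRing (LaurentSeries K) :=
    (Valuation.subgroups_basis
      (Valued.v : Valuation (LaurentSeries K) (WithZero (Multiplicative ℤ)))).nonarchimedean
  apply NonarchimedeanAddGroup.summable_of_tendsto_cofinite_zero
  rw [Nat.cofinite_eq_atTop]
  intro U hU
  obtain ⟨γ, hU₁⟩ := Valued.mem_nhds_zero.mp hU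
  suffices ∀ᶠ i in atTop, s i ∈ {y : LaurentSeries K |
      Valued.v y < MonoidWithZeroHom.ValueGroup₀.embedding γ.1} by
    simp_rw [← Valued.v.restrict_lt_iff_lt_embedding] at this
    exact this.mono fun _ hf ↦ hU₁ hf
  set D := -(WithZero.log (MonoidWithZeroHom.ValueGroup₀.embedding γ.1) - 1) with hD₀
  have hD : WithZero.exp (-D) < MonoidWithZeroHom.ValueGroup₀.embedding γ.1 := by
    rw [← WithZero.lt_log_iff_exp_lt (by simp), hD₀]
    simp
  obtain ⟨I, hI⟩ := hs D
  filter_upwards [eventually_ge_atTop I] with i hi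
  exact lt_of_le_of_lt ((LaurentSeries.valuation_le_iff_coeff_lt_eq_zero K).mpr (hI i hi)) hD

/-- Coefficients of the sum of a family are computed termwise. -/
theorem aux_coeff_tsum {K : Type*} [Field K] (s : ℕ → LaurentSeries K)
    (hs : ∀ N : ℤ, ∃ I : ℕ, ∀ i ≥ I, ∀ m < N, (s i).coeff m = 0) (n : ℤ) (I : ℕ)
    (hI : ∀ i ≥ I, (s i).coeff n = 0) :
    (∑' i, s i).coeff n = ∑ i ∈ Finset.range I, (s i).coeff n := by
  let _ : UniformSpace K := ⊥
  have : DiscreteTopology K := ⟨rfl⟩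
  have h := (aux_summable s hs).hasSum
  let φ : LaurentSeries K →+ K :=
    { toFun := fun x => x.coeff n, map_zero' := rfl, map_add' := fun _ _ => rfl }
  have hφ : Continuous φ := (LaurentSeries.uniformContinuous_coeff n).continuous
  have h1 := h.map φ hφ
  have h2 : HasSum (φ ∘ s) (∑ i ∈ Finset.range I, (φ ∘ s) i) :=
    hasSum_sum_of_ne_finset_zero (fun i hi => hI i (by simpa using hi))
  exact h1.unique h2

theorem aux_low_mul {K : Type*} [Field K] {x y : LaurentSeries K} {p q : ℤ}
    (hx : ∀ m < p, x.coeff m = 0) (hy : ∀ m < q, y.coeff m = 0) :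
    ∀ m < p + q, (x * y).coeff m = 0 := by
  have hx' : (p : WithTop ℤ) ≤ x.orderTop :=
    HahnSeries.le_orderTop_iff_forall.2 fun j hj => hx j (by exact_mod_cast hj)
  have hy' : (q : WithTop ℤ) ≤ y.orderTop :=
    HahnSeries.le_orderTop_iff_forall.2 fun j hj => hy j (by exact_mod_cast hj)
  intro m hm
  refine HahnSeries.le_orderTop_iff_forall.1
    ((add_le_add hx' hy').trans HahnSeries.orderTop_add_le_mul) m ?_
  exact_mod_cast hm

theorem aux_low_pow {K : Type*} [Field K] {x : LaurentSeries K} {p : ℤ}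
    (hx : ∀ m < p, x.coeff m = 0) (i : ℕ) :
    ∀ m < (i : ℤ) * p, (x ^ i).coeff m = 0 := by
  induction i with
  | zero =>
    intro m hm
    have : m ≠ 0 := by simp at hm; omega
    simp [HahnSeries.coeff_one, this]
  | succ i ih =>
    intro m hm
    rw [pow_succ]
    refine aux_low_mul ih hx m ?_
    push_cast at hm
    linarith

theorem aux_ball {K : Type*} [Field K] {c x : LaurentSeries K} {γ : ℤ} :
    x ∈ ball c γ ↔ ∀ m < γ, (x - c).coeff m = 0 := by
  by_cases h : x = c
  · subst h; simp [ball]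
  · have h' : x - c ≠ 0 := sub_ne_zero.2 h
    simp only [ball, Set.mem_ofPred_eq, h, false_or, ord]
    exact HahnSeries.le_order_iff_forall h'

theorem aux_coeff_single {K : Type*} [Field K] (x : LaurentSeries K) (β : ℤ) (z : K) (i : ℕ)
    (n : ℤ) : (x * HahnSeries.single β z ^ i).coeff n = x.coeff (n - i * β) * z ^ i := by
  rw [HahnSeries.single_pow]
  have := HahnSeries.coeff_mul_single_add (r := z ^ i) (x := x) (a := n - i * β) (b := i • β)
  rwa [nsmul_eq_mul, sub_add_cancel] at this

theorem aux_coeff_natmul {K : Type*} [Field K] (x : LaurentSeries K) (i : ℕ) (n : ℤ) :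
    (((i : LaurentSeries K) + 1) * x).coeff n = ((i : K) + 1) * x.coeff n := by
  have : ((i : LaurentSeries K) + 1) * x = (i + 1) • x := by
    rw [nsmul_eq_mul]; push_cast; rfl
  rw [this, HahnSeries.coeff_smul, nsmul_eq_mul]; push_cast; rfl

/-- Let `f` be strictly analytic on the ball `B = c + t^β K[[t]]`, with derivative `f'`,
and suppose `f' x ≠ 0` and `ord (f' x) = α` for all `x ∈ B`.  Then `f(B)` is contained in
the ball `f(c) + t^(α+β) K[[t]]` — equivalently, `ord (f x - f y) ≥ α + β` whenever
`x, y ∈ B` and `f x ≠ f y` — but `f(B)` is not contained in any ball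
`d + t^(α+β+1) K[[t]]`. -/
theorem stmt3 {K : Type*} [Field K] [CharZero K]
    (c : LaurentSeries K) (β : ℤ) (a : ℕ → LaurentSeries K)
    (hconv : ∀ N : ℤ, ∃ I : ℕ, ∀ i ≥ I, a i = 0 ∨ N ≤ ord (a i) + (i : ℤ) * β)
    (f f' : LaurentSeries K → LaurentSeries K)
    (hf : ∀ x ∈ ball c β, f x = ∑' i : ℕ, a i * (x - c) ^ i)
    (hf' : ∀ x ∈ ball c β,
      f' x = ∑' i : ℕ, ((i : LaurentSeries K) + 1) * a (i + 1) * (x - c) ^ i)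
    (α : ℤ) (hα : ∀ x ∈ ball c β, f' x ≠ 0 ∧ ord (f' x) = α) :
    (∀ x ∈ ball c β, f x ∈ ball (f c) (α + β)) ∧
    (∀ x ∈ ball c β, ∀ y ∈ ball c β, f x ≠ f y → α + β ≤ ord (f x - f y)) ∧
    (∀ d : LaurentSeries K, ∃ x ∈ ball c β, f x ∉ ball d (α + β + 1)) := by

  have hlow : ∀ N : ℤ, ∃ I : ℕ, ∀ i ≥ I, ∀ m < N - i * β, (a i).coeff m = 0 := by
    intro N
    obtain ⟨I, hI⟩ := hconv N
    refine ⟨I, fun i hi m hm => ?_⟩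
    rcases hI i hi with h | h
    · simp [h]
    · exact HahnSeries.coeff_eq_zero_of_lt_order (by unfold ord at h; linarith)
  have hs : ∀ x ∈ ball c β, ∀ N : ℤ, ∃ I : ℕ, ∀ i ≥ I, ∀ m < N,
      (a i * (x - c) ^ i).coeff m = 0 := by
    intro x hx N
    obtain ⟨I, hI⟩ := hlow N
    refine ⟨I, fun i hi m hm => ?_⟩
    exact aux_low_mul (hI i hi) (aux_low_pow (aux_ball.1 hx) i) m (by linarith)
  have hs' : ∀ x ∈ ball c β, ∀ N : ℤ, ∃ I : ℕ, ∀ i ≥ I, ∀ m < N,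
      (((i : LaurentSeries K) + 1) * a (i + 1) * (x - c) ^ i).coeff m = 0 := by
    intro x hx N
    obtain ⟨I, hI⟩ := hlow (N + β)
    refine ⟨I, fun i hi m hm => ?_⟩
    rw [mul_assoc, aux_coeff_natmul]
    have := aux_low_mul (hI (i + 1) (by omega)) (aux_low_pow (aux_ball.1 hx) i) m
      (by push_cast; linarith)
    rw [this, mul_zero]
  have hX : ∀ z : K, c + HahnSeries.single β z ∈ ball c β := by
    intro z
    rw [aux_ball]
    intro m hm
    rw [add_sub_cancel_left]
    exact HahnSeries.coeff_single_of_ne hm.ne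
  -- the polynomials describing the coefficients of `f` on `c + K t^β`
  have hpoly : ∀ n : ℤ, ∃ P : Polynomial K,
      (∀ i, P.coeff i = (a i).coeff (n - i * β)) ∧
      (∀ z : K, (f (c + HahnSeries.single β z)).coeff n = P.eval z) ∧
      (∀ z : K, (f' (c + HahnSeries.single β z)).coeff (n - β) = P.derivative.eval z) := by
    intro n
    obtain ⟨I, hI⟩ := hlow (n + 1)
    have hI0 : ∀ i ≥ I, (a i).coeff (n - i * β) = 0 := fun i hi => hI i hi _ (by linarith)
    let P : Polynomial K := ∑ i ∈ Finset.range (I + 1), Polynomial.monomial i ((a i).coeff (n - i * β))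
    have hP : ∀ i, P.coeff i = (a i).coeff (n - i * β) := by
      intro i
      simp only [P, Polynomial.finsetSum_coeff, Polynomial.coeff_monomial, Finset.sum_ite_eq',
        Finset.mem_range]
      split_ifs with h
      · rfl
      · exact (hI0 i (by omega)).symm
    have hdeg : P.natDegree < I + 1 := by
      rw [Nat.lt_succ_iff, Polynomial.natDegree_le_iff_coeff_eq_zero]
      intro i hi
      rw [hP, hI0 i hi.le]
    refine ⟨P, hP, fun z => ?_, fun z => ?_⟩
    · rw [hf _ (hX z), aux_coeff_tsum _ (hs _ (hX z)) n (I + 1), Polynomial.eval_eq_sum_range' hdeg]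
      · refine Finset.sum_congr rfl fun i _ => ?_
        rw [add_sub_cancel_left, aux_coeff_single, hP]
      · intro i hi
        rw [add_sub_cancel_left, aux_coeff_single, hI0 i (by omega), zero_mul]
    · have key : ∀ i : ℕ, (((i : LaurentSeries K) + 1) * a (i + 1) *
          (c + HahnSeries.single β z - c) ^ i).coeff (n - β) = P.derivative.coeff i * z ^ i := by
        intro i
        rw [add_sub_cancel_left, aux_coeff_single, aux_coeff_natmul, Polynomial.coeff_derivative, hP]
        have : n - β - i * β = n - ((i + 1 : ℕ) : ℤ) * β := by push_cast; ring
        rw [this]; ring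
      rw [hf' _ (hX z), aux_coeff_tsum _ (hs' _ (hX z)) (n - β) (I + 1),
        Polynomial.eval_eq_sum_range' (n := I + 1) (lt_of_le_of_lt P.natDegree_derivative_le (by omega))]
      · exact Finset.sum_congr rfl fun i _ => key i
      · intro i hi
        rw [key, Polynomial.coeff_derivative, hP, hI0 (i + 1) (by omega), zero_mul, zero_mul]
  -- all nonconstant coefficients are small
  have ha : ∀ i : ℕ, 1 ≤ i → ∀ m < α + β - i * β, (a i).coeff m = 0 := by
    intro i hi m hm
    obtain ⟨P, hP, -, hP'⟩ := hpoly (m + i * β)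
    have h0 : P.derivative = 0 := by
      apply Polynomial.funext
      intro z
      rw [← hP' z, Polynomial.eval_zero]
      apply HahnSeries.coeff_eq_zero_of_lt_order
      have := (hα _ (hX z)).2
      unfold ord at this
      rw [this]; linarith
    have h1 := Polynomial.derivative_eq_zero.1 h0
    have h2 := Polynomial.coeff_eq_zero_of_natDegree_lt (p := P) (n := i) (by omega)
    rwa [hP, add_sub_cancel_right] at h2
  have hfc : ∀ x ∈ ball c β, ∀ m < α + β, (f x).coeff m = (a 0).coeff m := by
    intro x hx m hm
    rw [hf x hx, aux_coeff_tsum _ (hs x hx) m 1]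
    · simp
    · intro i hi
      exact aux_low_mul (ha i hi) (aux_low_pow (aux_ball.1 hx) i) m (by linarith)
  have hmain : ∀ x ∈ ball c β, ∀ y ∈ ball c β, f x ∈ ball (f y) (α + β) := by
    intro x hx y hy
    rw [aux_ball]
    intro m hm
    rw [HahnSeries.coeff_sub, hfc x hx m hm, hfc y hy m hm, sub_self]
  refine ⟨fun x hx => hmain x hx c (Or.inl rfl), fun x hx y hy hne => ?_, fun d => ?_⟩
  · exact (hmain x hx y hy).resolve_left hne
  · by_contra! hcon
    obtain ⟨P, hP, hPe, hP'⟩ := hpoly (α + β)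
    have hconst : P = Polynomial.C (d.coeff (α + β)) := by
      apply Polynomial.funext
      intro z
      have := aux_ball.1 (hcon _ (hX z)) (α + β) (by linarith)
      rw [HahnSeries.coeff_sub, sub_eq_zero] at this
      rw [← hPe z, this, Polynomial.eval_C]
    have h1 := hP' 0
    rw [hconst, Polynomial.derivative_C, Polynomial.eval_zero, add_sub_cancel_right] at h1
    obtain ⟨hne, hord⟩ := hα _ (hX 0)
    unfold ord at hord
    rw [← hord] at h1
    exact hne (HahnSeries.coeff_order_eq_zero.1 h1)
end

section
/- Let K be a field of characteristic zero, and let f be a strictly analytic function on a ball B = c + t^β K[[t]] of K((t)), given by f(c+y) = ∑_{i∈ℕ} a_i y^i. Suppose there exists α ∈ ℤ such that ord(f'(x)) = α for every x ∈ B. Then for every x₀ ∈ B, the restriction of f to the ball x₀ + t^{β+1} K[[t]] is a bijection onto the ball f(x₀) + t^{α+β+1} K[[t]], and the inverse bijection is a strictly analytic function on the ball f(x₀) + t^{α+β+1} K[[t]]. -/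
open PowerSeries Filter Topology

namespace S4

section formal
variable {R : Type*} [CommRing R]

/-- the `n`-th coefficient of the formal composition `G ∘ H`. -/
noncomputable def cmp (G H : R⟦X⟧) (n : ℕ) : R :=
  ∑ i ∈ Finset.range (n + 1), coeff i G * coeff n (H ^ i)

lemma coeff_pow_congr {A B : R⟦X⟧} {n : ℕ} (h : ∀ m ≤ n, coeff m A = coeff m B) (i : ℕ) :
    coeff n (A ^ i) = coeff n (B ^ i) := by
  have h1 : (X : R⟦X⟧) ^ (n + 1) ∣ A - B := by
    rw [X_pow_dvd_iff]
    intro m hm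
    rw [map_sub, h m (by omega), sub_self]
  have h2 := (X_pow_dvd_iff.1 (h1.trans (sub_dvd_pow_sub_pow A B i))) n (by omega)
  rwa [map_sub, sub_eq_zero] at h2

lemma coeff_pow_add {A D : R⟦X⟧} {n : ℕ} (hA : X ∣ A) (hn : 1 ≤ n)
    (hD : X ^ n ∣ D) (i : ℕ) (hi : 2 ≤ i) :
    coeff n ((A + D) ^ i) = coeff n (A ^ i) := by
  have hXD : X ∣ D := (dvd_pow_self X (by omega)).trans hD
  have key : (X : R⟦X⟧) ^ (n + 1) ∣ (A + D) ^ i - A ^ i := by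
    rw [← (Commute.all (A + D) A).mul_geom_sum₂ i]
    rw [pow_succ]
    refine mul_dvd_mul (by simpa using hD) (Finset.dvd_sum fun j hj => ?_)
    rw [Finset.mem_range] at hj
    rcases Nat.eq_zero_or_pos j with rfl | hj'
    · exact Dvd.dvd.mul_left (hA.trans (dvd_pow_self _ (by omega))) _
    · exact Dvd.dvd.mul_right ((dvd_add hA hXD).trans (dvd_pow_self _ (by omega))) _
  have h2 := (X_pow_dvd_iff.1 key) n (by omega)
  rwa [map_sub, sub_eq_zero] at h2

lemma cmp_add (G : R⟦X⟧) {H : R⟦X⟧} (n : ℕ) (a : R) (hH : X ∣ H) :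
    cmp G (H + monomial (n + 1) a) (n + 1) = cmp G H (n + 1) + coeff 1 G * a := by
  unfold cmp
  rw [Finset.sum_range_succ', Finset.sum_range_succ', Finset.sum_range_succ',
    Finset.sum_range_succ']
  have : ∀ i ∈ Finset.range n, coeff (i + 1 + 1) G * coeff (n + 1) ((H + monomial (n + 1) a) ^ (i + 1 + 1)) = coeff (i + 1 + 1) G * coeff (n + 1) (H ^ (i + 1 + 1)) := by
    intro i _
    rw [coeff_pow_add hH (by omega) _ _ (by omega)]
    rw [X_pow_dvd_iff]
    intro m hm
    rw [coeff_monomial, if_neg (by omega)]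
  rw [Finset.sum_congr rfl this]
  simp [mul_add]
  ring

/-- successive approximations of the inverse series -/
noncomputable def approx (G : R⟦X⟧) (v : R) : ℕ → R⟦X⟧
  | 0 => 0
  | n + 1 => approx G v n +
      monomial (n + 1) (v * (coeff (n + 1) (X : R⟦X⟧) - cmp G (approx G v n) (n + 1)))

lemma X_dvd_approx (G : R⟦X⟧) (v : R) (n : ℕ) : X ∣ approx G v n := by
  induction n with
  | zero => simp [approx]
  | succ n ih =>
    refine dvd_add ih ?_
    rw [X_dvd_iff, ← coeff_zero_eq_constantCoeff_apply, coeff_monomial, if_neg (by omega)]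

lemma coeff_approx (G : R⟦X⟧) (v : R) (m k : ℕ) :
    coeff m (approx G v (m + k)) = coeff m (approx G v m) := by
  induction k with
  | zero => rfl
  | succ k ih =>
    rw [← add_assoc, approx, map_add, ih, coeff_monomial, if_neg (by omega), add_zero]

lemma exists_inv (G : R⟦X⟧) (h0 : coeff 0 G = 0) (h1 : IsUnit (coeff 1 G)) :
    ∃ H : R⟦X⟧, coeff 0 H = 0 ∧ IsUnit (coeff 1 H) ∧ ∀ n, cmp G H n = coeff n (X : R⟦X⟧) := by
  obtain ⟨v, hv⟩ := h1.exists_right_inv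
  let H : R⟦X⟧ := PowerSeries.mk fun n => coeff n (approx G v n)
  have hH : ∀ n, cmp G H n = coeff n (X : R⟦X⟧) := by
    intro n
    have e : cmp G H n = cmp G (approx G v n) n := by
      unfold cmp
      refine Finset.sum_congr rfl fun i _ => ?_
      rw [coeff_pow_congr (B := approx G v n)]
      intro m hm
      obtain ⟨k, rfl⟩ := Nat.exists_eq_add_of_le hm
      rw [coeff_approx]
      simp [H]
    rw [e]
    cases n with
    | zero => simp only [cmp, zero_add, Finset.range_one, Finset.sum_singleton, h0]; simp
    | succ n =>
      rw [approx, cmp_add _ _ _ (X_dvd_approx G v n), ← mul_assoc, hv]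
      ring
  have h00 : coeff 0 H = 0 := by simp [H, approx]
  refine ⟨H, h00, ?_, hH⟩
  have := hH 1
  simp only [cmp, Finset.sum_range_succ, Finset.range_zero, Finset.sum_empty, h0, pow_one,
    zero_mul, zero_add, coeff_one_X] at this
  exact IsUnit.of_mul_eq_one _ (by rw [mul_comm]; exact this)

end formal

section top
variable {K : Type*} [Field K]

/-- the subgroup `t^n K[[t]]`. -/
def VV (K : Type*) [Field K] (n : ℤ) : AddSubgroup (LaurentSeries K) where
  carrier := {x | ∀ k < n, x.coeff k = 0}
  zero_mem' := by intro k _; simp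
  add_mem' := by
    intro a b ha hb k hk
    rw [HahnSeries.coeff_add, ha k hk, hb k hk, add_zero]
  neg_mem' := by
    intro a ha k hk
    rw [HahnSeries.coeff_neg, ha k hk, neg_zero]

lemma mem_VV {n : ℤ} {x : LaurentSeries K} : x ∈ VV K n ↔ ∀ k < n, x.coeff k = 0 := Iff.rfl

lemma mem_VV_iff {n : ℤ} {x : LaurentSeries K} : x ∈ VV K n ↔ x = 0 ∨ n ≤ ord x := by
  constructor
  · intro h
    by_cases hx : x = 0
    · exact Or.inl hx
    · right
      by_contra hlt
      exact (HahnSeries.coeff_order_eq_zero.not.2 hx) (h _ (not_le.1 hlt))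
  · rintro (rfl | h)
    · exact zero_mem _
    · intro k hk
      exact HahnSeries.coeff_eq_zero_of_lt_order (lt_of_lt_of_le hk h)

lemma mem_ball {c x : LaurentSeries K} {γ : ℤ} : x ∈ ball c γ ↔ x - c ∈ VV K γ := by
  rw [mem_VV_iff, sub_eq_zero]; rfl

lemma mem_VV_v {n : ℤ} {x : LaurentSeries K} :
    x ∈ VV K n ↔ Valued.v x ≤ WithZero.exp (-n) :=
  (LaurentSeries.valuation_le_iff_coeff_lt_eq_zero K).symm

lemma VV_mono {m n : ℤ} (h : m ≤ n) {x : LaurentSeries K} (hx : x ∈ VV K n) : x ∈ VV K m :=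
  fun k hk => hx k (by omega)

lemma VV_mul {m n : ℤ} {x y : LaurentSeries K} (hx : x ∈ VV K m) (hy : y ∈ VV K n) :
    x * y ∈ VV K (m + n) := by
  rw [mem_VV_v] at *
  rw [map_mul, neg_add, WithZero.exp_add]
  exact mul_le_mul' hx hy

lemma VV_one : (1 : LaurentSeries K) ∈ VV K 0 := by
  rw [mem_VV_v]; simp

lemma VV_pow {m : ℤ} {x : LaurentSeries K} (hx : x ∈ VV K m) (i : ℕ) :
    x ^ i ∈ VV K (i * m) := by
  induction i with
  | zero => simpa using VV_one
  | succ i ih =>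
    rw [pow_succ]
    have := VV_mul ih hx
    rwa [show (i : ℤ) * m + m = ((i + 1 : ℕ) : ℤ) * m by push_cast; ring] at this

lemma VV_C (r : K) : (HahnSeries.C r : LaurentSeries K) ∈ VV K 0 := by
  intro k hk
  rw [HahnSeries.C_apply, HahnSeries.coeff_single_of_ne (by omega)]

lemma VV_natCast (i : ℕ) : (i : LaurentSeries K) ∈ VV K 0 := by
  have := VV_C (i : K)
  rwa [map_natCast] at this

lemma nhds_basis : (𝓝 (0 : LaurentSeries K)).HasBasis (fun _ : ℤ => True)
    (fun n => (VV K n : Set (LaurentSeries K))) := by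
  rw [Filter.hasBasis_iff]
  intro U
  constructor
  · intro hU
    obtain ⟨γ, hU₁⟩ := Valued.mem_nhds_zero.mp hU
    set D := -(WithZero.log (MonoidWithZeroHom.ValueGroup₀.embedding γ.1) - 1) with hD₀
    have hD : WithZero.exp (-D) < MonoidWithZeroHom.ValueGroup₀.embedding γ.1 := by
      rw [← WithZero.lt_log_iff_exp_lt (by simp), hD₀]
      simp
    refine ⟨D, trivial, fun x hx => hU₁ ?_⟩
    change Valued.v.restrict x < γ.1
    rw [Valued.v.restrict_lt_iff_lt_embedding]
    exact lt_of_le_of_lt (mem_VV_v.1 hx) hD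
  · rintro ⟨n, -, hn⟩
    refine Filter.mem_of_superset ?_ hn
    obtain ⟨x, hx⟩ := LaurentSeries.valuation_surjective K (WithZero.exp (-n))
    have h0 : Valued.v.restrict x ≠ 0 := fun h ↦ by
      have h' : Valued.v x = 0 := MonoidWithZeroHom.ValueGroup₀.restrict₀_eq_zero_iff.1 h
      rw [hx] at h'
      exact WithZero.exp_ne_zero h'
    refine Valued.mem_nhds_zero.2 ⟨Units.mk0 (Valued.v.restrict x) h0, fun y hy => ?_⟩
    have hy' : Valued.v.restrict y < Valued.v.restrict x := hy
    rw [Valued.v.restrict_lt_iff_lt_embedding] at hy'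
    refine mem_VV_v.2 (le_of_lt ?_)
    rw [← hx]
    nth_rw 2 [← Valuation.coe_ofClass]
    rw [← MonoidWithZeroHom.ValueGroup₀.embedding_restrict₀]
    exact hy'

instance nonarch : NonarchimedeanRing (LaurentSeries K) where
  is_nonarchimedean := by
    intro U hU
    obtain ⟨n, -, hn⟩ := nhds_basis.mem_iff.1 hU
    exact ⟨⟨VV K n, AddSubgroup.isOpen_of_mem_nhds _ (nhds_basis.mem_of_mem (i := n) trivial)⟩, hn⟩

lemma VV_open (n : ℤ) : IsOpen (VV K n : Set (LaurentSeries K)) :=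
  AddSubgroup.isOpen_of_mem_nhds _ (nhds_basis.mem_of_mem (i := n) trivial)

lemma VV_closed (n : ℤ) : IsClosed (VV K n : Set (LaurentSeries K)) :=
  AddSubgroup.isClosed_of_isOpen _ (VV_open n)

lemma summable_of {ι : Type*} {g : ι → LaurentSeries K}
    (h : ∀ n : ℤ, {i | g i ∉ VV K n}.Finite) : Summable g := by
  apply NonarchimedeanAddGroup.summable_of_tendsto_cofinite_zero
  rw [nhds_basis.tendsto_right_iff]
  intro n _
  exact h n

lemma tsum_mem_VV {ι : Type*} {g : ι → LaurentSeries K} {n : ℤ}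
    (h : ∀ i, g i ∈ VV K n) : ∑' i, g i ∈ VV K n := by
  by_cases hs : Summable g
  · exact (VV_closed n).mem_of_tendsto hs.hasSum (Eventually.of_forall fun s => sum_mem fun i _ => h i)
  · rw [tsum_eq_zero_of_not_summable hs]; exact zero_mem _

lemma coeff_tsum {ι : Type*} {g : ι → LaurentSeries K} (hs : Summable g) (k : ℤ) (s : Finset ι)
    (h : ∀ i ∉ s, g i ∈ VV K (k + 1)) : (∑' i, g i).coeff k = ∑ i ∈ s, (g i).coeff k := by
  classical
  have h1 := hs.sum_add_tsum_subtype_compl s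
  have h2 : ∑' i : {i // i ∉ s}, g i ∈ VV K (k + 1) := tsum_mem_VV fun i => h i i.2
  rw [← h1, HahnSeries.coeff_add, h2 k (by omega), add_zero]
  exact map_sum (⟨⟨fun x : LaurentSeries K => x.coeff k, by simp⟩, by simp⟩ : LaurentSeries K →+ K) g s

end top
end S4

namespace S4
lemma cauchy_prod {R : Type*} [CommRing R] [UniformSpace R] [IsUniformAddGroup R]
    [NonarchimedeanRing R] [T3Space R] {f g : ℕ → R} (hf : Summable f) (hg : Summable g) :
    (∑' n, f n) * ∑' n, g n = ∑' n, ∑ p ∈ Finset.HasAntidiagonal.antidiagonal n, f p.1 * g p.2 :=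
  hf.tsum_mul_tsum_eq_tsum_sum_antidiagonal hg (hf.mul_of_nonarchimedean hg)

section ev
variable {K : Type*} [Field K]

/-- inclusion of power series in Laurent series -/
noncomputable abbrev inc (K : Type*) [Field K] : K⟦X⟧ →+* LaurentSeries K := HahnSeries.ofPowerSeries ℤ K

lemma inc_mem (p : K⟦X⟧) : inc K p ∈ VV K 0 := by
  rw [mem_VV_v]
  simpa using (LaurentSeries.val_le_one_iff_eq_coe K (inc K p)).2 ⟨p, rfl⟩

lemma exists_inc {x : LaurentSeries K} (hx : x ∈ VV K 0) : ∃ p, inc K p = x := by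
  rw [mem_VV_v] at hx
  exact (LaurentSeries.val_le_one_iff_eq_coe K x).1 (by simpa using hx)

/-- evaluation -/
noncomputable def ev (G : K⟦X⟧⟦X⟧) (s : LaurentSeries K) : LaurentSeries K :=
  ∑' n : ℕ, inc K (coeff n G) * s ^ n

lemma ev_term_mem (p : K⟦X⟧) {s : LaurentSeries K} (hs : s ∈ VV K 1) (n : ℕ) :
    inc K p * s ^ n ∈ VV K n := by
  simpa using VV_mul (inc_mem p) (VV_pow hs n)

lemma summable_of_nat {g : ℕ → LaurentSeries K} (h : ∀ N : ℤ, ∃ I, ∀ i ≥ I, g i ∈ VV K N) :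
    Summable g := by
  refine summable_of fun N => ?_
  obtain ⟨I, hI⟩ := h N
  refine (Set.finite_lt_nat I).subset fun i hi => ?_
  by_contra hlt
  exact hi (hI i (not_lt.1 hlt))

lemma ev_summable (G : K⟦X⟧⟦X⟧) {s : LaurentSeries K} (hs : s ∈ VV K 1) :
    Summable fun n : ℕ => inc K (coeff n G) * s ^ n :=
  summable_of_nat fun N => ⟨N.toNat, fun i hi => VV_mono (by omega) (ev_term_mem _ hs i)⟩

lemma ev_mul (G H : K⟦X⟧⟦X⟧) {s : LaurentSeries K} (hs : s ∈ VV K 1) :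
    ev (G * H) s = ev G s * ev H s := by
  unfold ev
  rw [cauchy_prod (ev_summable G hs) (ev_summable H hs)]
  refine tsum_congr fun n => ?_
  rw [coeff_mul, map_sum, Finset.sum_mul]
  refine Finset.sum_congr rfl fun p hp => ?_
  rw [Finset.HasAntidiagonal.mem_antidiagonal] at hp
  rw [map_mul, ← hp, pow_add]
  ring

lemma ev_one (s : LaurentSeries K) : ev (1 : K⟦X⟧⟦X⟧) s = 1 := by
  unfold ev
  rw [tsum_eq_single 0]
  · simp
  · intro n hn
    rw [coeff_one, if_neg hn]; simp

lemma ev_pow (H : K⟦X⟧⟦X⟧) {s : LaurentSeries K} (hs : s ∈ VV K 1) (i : ℕ) :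
    ev (H ^ i) s = ev H s ^ i := by
  induction i with
  | zero => simp [ev_one]
  | succ i ih => rw [pow_succ, ev_mul _ _ hs, ih, pow_succ]

lemma ev_mem (H : K⟦X⟧⟦X⟧) (h0 : coeff 0 H = 0) {s : LaurentSeries K} (hs : s ∈ VV K 1) :
    ev H s ∈ VV K 1 := by
  refine tsum_mem_VV fun n => ?_
  rcases n with _ | n
  · rw [h0]; simp
  · exact VV_mono (by push_cast; omega) (ev_term_mem _ hs (n + 1))

lemma ev_X (s : LaurentSeries K) : ev (X : K⟦X⟧⟦X⟧) s = s := by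
  unfold ev
  rw [tsum_eq_single 1]
  · simp
  · intro n hn
    rw [coeff_X, if_neg hn]; simp

lemma ev_comp (G H : K⟦X⟧⟦X⟧) (h0 : coeff 0 H = 0) (hc : ∀ n, cmp G H n = coeff n (X : K⟦X⟧⟦X⟧))
    {s : LaurentSeries K} (hs : s ∈ VV K 1) : ev G (ev H s) = s := by
  have hXH : X ∣ H := by
    rw [X_dvd_iff, ← coeff_zero_eq_constantCoeff_apply, h0]
  have hz : ∀ i n : ℕ, n < i → coeff n (H ^ i) = 0 := fun i n h =>
    X_pow_dvd_iff.1 (pow_dvd_pow_of_dvd hXH i) n h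
  let F : ℕ → ℕ → LaurentSeries K := fun i n =>
    inc K (coeff i G) * (inc K (coeff n (H ^ i)) * s ^ n)
  have hF : Summable (Function.uncurry F) := by
    refine summable_of fun N => ?_
    refine ((Set.finite_lt_nat N.toNat).prod (Set.finite_lt_nat N.toNat)).subset ?_
    rintro ⟨i, n⟩ hin
    by_contra hcon
    apply hin
    change F i n ∈ _
    by_cases hni : n < i
    · simp only [F, hz i n hni, map_zero, zero_mul, mul_zero]
      exact zero_mem _
    · have : ¬ n < N.toNat := by
        intro h
        exact hcon ⟨by simp; omega, h⟩
      have h1 := VV_mul (inc_mem (coeff i G)) (ev_term_mem (coeff n (H ^ i)) hs n)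
      exact VV_mono (by omega) h1
  calc ev G (ev H s) = ∑' i, ∑' n, F i n := by
        unfold ev
        refine tsum_congr fun i => ?_
        have := ev_pow H hs i
        unfold ev at this
        rw [← this, tsum_mul_left]
    _ = ∑' n, ∑' i, F i n := hF.tsum_comm.symm
    _ = ev X s := by
        unfold ev
        refine tsum_congr fun n => ?_
        rw [← hc n, cmp, map_sum, Finset.sum_mul, tsum_eq_sum (s := Finset.range (n + 1))]
        · refine Finset.sum_congr rfl fun i _ => ?_
          rw [map_mul, mul_assoc]
        · intro i hi
          rw [Finset.mem_range] at hi
          simp only [F, hz i n (by omega), map_zero, zero_mul, mul_zero]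
    _ = s := ev_X s

/-- Two-sided inverse. -/
lemma ev_inverse (G : K⟦X⟧⟦X⟧) (h0 : coeff 0 G = 0) (h1 : IsUnit (coeff 1 G)) :
    ∃ H : K⟦X⟧⟦X⟧, coeff 0 H = 0 ∧ (∀ s ∈ VV K 1, ev G (ev H s) = s) ∧
      ∀ s ∈ VV K 1, ev H (ev G s) = s := by
  obtain ⟨H, hH0, hH1, hH⟩ := exists_inv G h0 h1
  obtain ⟨M, hM0, hM1, hM⟩ := exists_inv H hH0 hH1
  have e1 : ∀ s ∈ VV K 1, ev G (ev H s) = s := fun s hs => ev_comp G H hH0 hH hs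
  have e2 : ∀ s ∈ VV K 1, ev H (ev M s) = s := fun s hs => ev_comp H M hM0 hM hs
  refine ⟨H, hH0, e1, fun s hs => ?_⟩
  have e3 := e1 _ (ev_mem M hM0 hs)
  rw [e2 s hs] at e3
  rw [e3, e2 s hs]

/-- the monomial `t^n` -/
noncomputable def T (K : Type*) [Field K] (n : ℤ) : LaurentSeries K := HahnSeries.single n 1

lemma T_add (m n : ℤ) : T K (m + n) = T K m * T K n := by
  simp [T, HahnSeries.single_mul_single]

lemma T_zero : T K 0 = 1 := rfl

lemma T_pow (m : ℤ) (i : ℕ) : T K m ^ i = T K (i * m) := by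
  induction i with
  | zero => simp [T_zero]
  | succ i ih => rw [pow_succ, ih, ← T_add]; congr 1; push_cast; ring

lemma T_mem (n : ℤ) : T K n ∈ VV K n := by
  intro k hk
  rw [T, HahnSeries.coeff_single_of_ne (by omega)]

lemma T_cancel (n : ℤ) (x : LaurentSeries K) : T K n * (T K (-n) * x) = x := by
  rw [← mul_assoc, ← T_add, add_neg_cancel, T_zero, one_mul]

lemma T_cancel' (n : ℤ) (x : LaurentSeries K) : T K (-n) * (T K n * x) = x := by
  rw [← mul_assoc, ← T_add, neg_add_cancel, T_zero, one_mul]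

/-- Gauss norm lemma. -/
lemma gauss [CharZero K] (β α : ℤ) (e : ℕ → LaurentSeries K)
    (he : ∀ N : ℤ, ∃ I : ℕ, ∀ i ≥ I, e i ∈ VV K (N - i * β))
    (h : ∀ y ∈ VV K β, ∑' i : ℕ, e i * y ^ i ∈ VV K α) (i : ℕ) : e i ∈ VV K (α - i * β) := by
  have key : ∀ k < α, ∀ i, (e i * T K (i * β)).coeff k = 0 := by
    intro k hk
    obtain ⟨I, hI⟩ := he (k + 1)
    let P : Polynomial K := ∑ i ∈ Finset.range I, Polynomial.monomial i ((e i * T K (i * β)).coeff k)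
    have hmem : ∀ i ≥ I, e i * T K (i * β) ∈ VV K (k + 1) := by
      intro i hi
      simpa using VV_mul (hI i hi) (T_mem (K := K) (i * β))
    have hP : P = 0 := by
      refine Polynomial.funext fun r => ?_
      have hy : T K β * HahnSeries.C r ∈ VV K β := by simpa using VV_mul (T_mem β) (VV_C r)
      have h1 := h _ hy k hk
      rw [coeff_tsum (s := Finset.range I)] at h1
      · rw [Polynomial.eval_zero, ← h1, Polynomial.eval_finsetSum]
        refine Finset.sum_congr rfl fun i _ => ?_
        rw [Polynomial.eval_monomial, mul_pow, T_pow, ← map_pow, ← mul_assoc, mul_comm _ (HahnSeries.C _),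
          HahnSeries.C_mul_eq_smul, HahnSeries.coeff_smul, smul_eq_mul, mul_comm]
      · refine summable_of_nat fun N => ?_
        obtain ⟨J, hJ⟩ := he N
        refine ⟨J, fun i hi => ?_⟩
        simpa using VV_mul (hJ i hi) (VV_pow hy i)
      · intro i hi
        rw [Finset.mem_range, not_lt] at hi
        simpa using VV_mul (hI i hi) (VV_pow hy i)
    intro i
    by_cases hi : i < I
    · have := congrArg (fun p => Polynomial.coeff p i) hP
      simpa [P, Polynomial.finsetSum_coeff, Polynomial.coeff_monomial, hi] using this
    · exact hmem i (not_lt.1 hi) k (by omega)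
  have h2 : e i * T K (i * β) ∈ VV K α := fun k hk => key k hk i
  have h3 := VV_mul h2 (T_mem (K := K) (-(i * β)))
  rwa [mul_assoc, ← T_add, add_neg_cancel, T_zero, mul_one, ← sub_eq_add_neg] at h3

end ev
end S4

namespace S4
section recenter
variable {K : Type*} [Field K]

/-- the coefficients at the new centre -/
noncomputable def reco (a : ℕ → LaurentSeries K) (d : LaurentSeries K) (k : ℕ) : LaurentSeries K :=
  ∑' i : ℕ, a i * ((i.choose k : ℕ) : LaurentSeries K) * d ^ (i - k)

lemma recenter {β : ℤ} {a : ℕ → LaurentSeries K}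
    (ha : ∀ N : ℤ, ∃ I : ℕ, ∀ i ≥ I, a i ∈ VV K (N - i * β))
    {d z : LaurentSeries K} (hd : d ∈ VV K β) (hz : z ∈ VV K β) :
    Summable (fun k => reco a d k * z ^ k) ∧
    ∑' i : ℕ, a i * (z + d) ^ i = ∑' k : ℕ, reco a d k * z ^ k := by
  let F : ℕ → ℕ → LaurentSeries K := fun k i =>
    a i * ((i.choose k : ℕ) : LaurentSeries K) * d ^ (i - k) * z ^ k
  have hF : Summable (Function.uncurry F) := by
    refine summable_of fun N => ?_
    obtain ⟨I, hI⟩ := ha N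
    refine ((Set.finite_lt_nat I).prod (Set.finite_lt_nat I)).subset ?_
    rintro ⟨k, i⟩ hin
    by_contra hcon
    apply hin
    change F k i ∈ _
    by_cases hki : i < k
    · simp only [F, Nat.choose_eq_zero_of_lt hki, Nat.cast_zero, zero_mul, mul_zero]
      exact zero_mem _
    · have hi : ¬ i < I := fun h => hcon ⟨by simp; omega, h⟩
      have h1 := VV_mul (VV_mul (VV_mul (hI i (by omega)) (VV_natCast (i.choose k)))
        (VV_pow hd (i - k))) (VV_pow hz k)
      have e : N - i * β + 0 + ((i - k : ℕ) : ℤ) * β + k * β = N := by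
        rw [Nat.cast_sub (by omega)]; ring
      rwa [e] at h1
  have e1 : ∀ k, ∑' i, F k i = reco a d k * z ^ k := fun k => by
    rw [reco, ← tsum_mul_right]
  constructor
  · have := hF.prod
    simpa only [Function.uncurry_apply_pair, e1] using this
  · calc ∑' i : ℕ, a i * (z + d) ^ i = ∑' i, ∑' k, F k i := by
          refine tsum_congr fun i => ?_
          rw [tsum_eq_sum (s := Finset.range (i + 1)), add_pow, Finset.mul_sum]
          · refine Finset.sum_congr rfl fun k _ => ?_
            simp only [F]; ring
          · intro k hk
            rw [Finset.mem_range] at hk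
            simp only [F, Nat.choose_eq_zero_of_lt (show i < k by omega), Nat.cast_zero, zero_mul,
              mul_zero]
      _ = ∑' k, ∑' i, F k i := hF.tsum_comm
      _ = _ := tsum_congr e1

lemma reco_mem {α β : ℤ} {a : ℕ → LaurentSeries K}
    (ha : ∀ i : ℕ, a (i + 1) ∈ VV K (α - i * β)) {d : LaurentSeries K} (hd : d ∈ VV K β) (k : ℕ) :
    reco a d (k + 1) ∈ VV K (α - k * β) := by
  refine tsum_mem_VV fun i => ?_
  by_cases hki : i < k + 1
  · simp only [Nat.choose_eq_zero_of_lt hki, Nat.cast_zero, zero_mul, mul_zero]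
    exact zero_mem _
  · obtain ⟨j, rfl⟩ : ∃ j, i = j + 1 := ⟨i - 1, by omega⟩
    have h1 := VV_mul (VV_mul (ha j) (VV_natCast ((j + 1).choose (k + 1))))
        (VV_pow hd (j + 1 - (k + 1)))
    have e : α - j * β + 0 + ((j + 1 - (k + 1) : ℕ) : ℤ) * β = α - k * β := by
      rw [Nat.cast_sub (by omega)]; push_cast; ring
    rwa [e] at h1

lemma reco_zero (a : ℕ → LaurentSeries K) (d : LaurentSeries K) :
    reco a d 0 = ∑' i : ℕ, a i * d ^ i := by
  simp [reco]

lemma reco_one {β : ℤ} {a : ℕ → LaurentSeries K}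
    (ha : ∀ N : ℤ, ∃ I : ℕ, ∀ i ≥ I, a i ∈ VV K (N - i * β))
    {d : LaurentSeries K} (hd : d ∈ VV K β) :
    reco a d 1 = ∑' i : ℕ, ((i : LaurentSeries K) + 1) * a (i + 1) * d ^ i := by
  unfold reco
  rw [Summable.tsum_eq_zero_add]
  · simp only [Nat.choose_zero_succ, Nat.cast_zero, mul_zero, zero_mul, zero_add]
    refine tsum_congr fun i => ?_
    simp only [Nat.choose_one_right, Nat.add_sub_cancel]
    push_cast
    ring
  · refine summable_of_nat fun N => ?_
    obtain ⟨I, hI⟩ := ha (N + β)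
    refine ⟨I + 1, fun i hi => ?_⟩
    have h1 := VV_mul (VV_mul (hI i (by omega)) (VV_natCast (i.choose 1))) (VV_pow hd (i - 1))
    have e : N + β - i * β + 0 + ((i - 1 : ℕ) : ℤ) * β = N := by
      rw [Nat.cast_sub (by omega)]; push_cast; ring
    rwa [e] at h1

lemma isUnit_of_inc {x : LaurentSeries K} {p : K⟦X⟧} {α : ℤ} (hx : x ≠ 0) (ho : ord x = α)
    (hp : inc K p = T K (-α) * x) : IsUnit p := by
  rw [PowerSeries.isUnit_iff_constantCoeff, isUnit_iff_ne_zero]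
  intro h
  have h1 : inc K p ∈ VV K 1 := by
    obtain ⟨q, rfl⟩ := X_dvd_iff.2 h
    rw [map_mul]
    have hX : inc K X ∈ VV K 1 := by
      rw [inc, HahnSeries.ofPowerSeries_X]; exact T_mem 1
    simpa using VV_mul hX (inc_mem q)
  rw [hp] at h1
  have h2 := VV_mul (T_mem (K := K) α) h1
  rw [T_cancel] at h2
  rcases mem_VV_iff.1 h2 with h3 | h3
  · exact hx h3
  · omega

end recenter
end S4

/-- Let `f` be strictly analytic on the ball `B = c + t^β K[[t]]`, with derivative `f'`,
and suppose `f' x ≠ 0` and `ord (f' x) = α` for all `x ∈ B`.  Then for every `x₀ ∈ B`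
the restriction of `f` to `x₀ + t^(β+1) K[[t]]` is a bijection onto the ball
`f(x₀) + t^(α+β+1) K[[t]]`, whose inverse is strictly analytic: there is a sequence
`(b_j)` with the summability property relative to the exponent `α+β+1` such that the
inverse is given by `w ↦ x₀ + ∑_j b_j (w - f x₀)^j`. -/
theorem stmt4 {K : Type*} [Field K] [CharZero K]
    (c : LaurentSeries K) (β : ℤ) (a : ℕ → LaurentSeries K)
    (hconv : ∀ N : ℤ, ∃ I : ℕ, ∀ i ≥ I, a i = 0 ∨ N ≤ ord (a i) + (i : ℤ) * β)
    (f f' : LaurentSeries K → LaurentSeries K)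
    (hf : ∀ x ∈ ball c β, f x = ∑' i : ℕ, a i * (x - c) ^ i)
    (hf' : ∀ x ∈ ball c β,
      f' x = ∑' i : ℕ, ((i : LaurentSeries K) + 1) * a (i + 1) * (x - c) ^ i)
    (α : ℤ) (hα : ∀ x ∈ ball c β, f' x ≠ 0 ∧ ord (f' x) = α) :
    ∀ x₀ ∈ ball c β,
      Set.BijOn f (ball x₀ (β + 1)) (ball (f x₀) (α + β + 1)) ∧
      ∃ b : ℕ → LaurentSeries K,
        (∀ N : ℤ, ∃ I : ℕ, ∀ j ≥ I, b j = 0 ∨ N ≤ ord (b j) + (j : ℤ) * (α + β + 1)) ∧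
        ∀ w ∈ ball (f x₀) (α + β + 1), ∀ x ∈ ball x₀ (β + 1),
          f x = w → x = x₀ + ∑' j : ℕ, b j * (w - f x₀) ^ j := by


  have ha : ∀ N : ℤ, ∃ I : ℕ, ∀ i ≥ I, a i ∈ S4.VV K (N - i * β) := by
    intro N
    obtain ⟨I, hI⟩ := hconv N
    refine ⟨I, fun i hi => S4.mem_VV_iff.2 ?_⟩
    rcases hI i hi with h | h
    · exact Or.inl h
    · right; linarith

  have ha1 : ∀ i : ℕ, a (i + 1) ∈ S4.VV K (α - i * β) := by
    intro i
    have h1 := S4.gauss β α (fun i : ℕ => ((i : LaurentSeries K) + 1) * a (i + 1)) (by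
      intro N
      obtain ⟨I, hI⟩ := ha (N + β)
      refine ⟨I, fun i hi => ?_⟩
      have h1 := S4.VV_mul (S4.VV_natCast (K := K) (i + 1)) (hI (i + 1) (by omega))
      have e : 0 + (N + β - ((i + 1 : ℕ) : ℤ) * β) = N - i * β := by push_cast; ring
      rw [e] at h1
      simpa using h1) (by
      intro y hy
      have hx : c + y ∈ ball c β := S4.mem_ball.2 (by simpa using hy)
      have h1 := hf' _ hx
      rw [add_sub_cancel_left] at h1
      rw [← h1, S4.mem_VV_iff]
      exact Or.inr (hα _ hx).2.ge) i
    have h2 := S4.VV_mul (S4.VV_C (((i : K) + 1)⁻¹)) h1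
    rw [← mul_assoc, zero_add] at h2
    have h3 : (HahnSeries.C (((i : K) + 1)⁻¹) : LaurentSeries K) * ((i : LaurentSeries K) + 1) = 1 := by
      have : ((i : LaurentSeries K) + 1) = HahnSeries.C ((i : K) + 1) := by
        rw [map_add, map_natCast, map_one]
      rw [this, ← map_mul, inv_mul_cancel₀ (Nat.cast_add_one_ne_zero i), map_one]
    rwa [h3, one_mul] at h2
  intro x₀ hx₀
  set d := x₀ - c with hd_def
  have hd : d ∈ S4.VV K β := S4.mem_ball.1 hx₀
  have hex : ∀ k : ℕ, ∃ p : PowerSeries K,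
      S4.inc K p = S4.T K (-α) * (S4.T K (k * β) * S4.reco a d (k + 1)) := by
    intro k
    refine S4.exists_inc ?_
    have := S4.VV_mul (S4.T_mem (K := K) (-α)) (S4.VV_mul (S4.T_mem (K := K) (k * β)) (S4.reco_mem ha1 hd k))
    simpa using this
  choose g hg using hex
  let G : PowerSeries (PowerSeries K) := PowerSeries.mk fun n => Nat.casesOn n 0 g
  have hG0 : PowerSeries.coeff 0 G = 0 := by simp [G]
  have hGs : ∀ k, PowerSeries.coeff (k + 1) G = g k := by intro k; simp [G]
  have hG1 : IsUnit (PowerSeries.coeff 1 G) := by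
    rw [hGs 0]
    have h0 := hg 0
    rw [Nat.cast_zero, zero_mul, S4.T_zero, one_mul, zero_add, S4.reco_one ha hd, ← hf' x₀ hx₀] at h0
    exact S4.isUnit_of_inc (hα x₀ hx₀).1 (hα x₀ hx₀).2 h0
  have hfx : ∀ x ∈ ball x₀ (β + 1), S4.T K (-β) * (x - x₀) ∈ S4.VV K 1 ∧
      f x = f x₀ + S4.T K (α + β) * S4.ev G (S4.T K (-β) * (x - x₀)) := by
    intro x hx
    have hz1 : x - x₀ ∈ S4.VV K (β + 1) := S4.mem_ball.1 hx
    have hz : x - x₀ ∈ S4.VV K β := S4.VV_mono (by omega) hz1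
    have hs : S4.T K (-β) * (x - x₀) ∈ S4.VV K 1 := by
      simpa using S4.VV_mul (S4.T_mem (K := K) (-β)) hz1
    refine ⟨hs, ?_⟩
    have hxc : x - c = (x - x₀) + d := by rw [hd_def]; ring
    have hxb : x ∈ ball c β := S4.mem_ball.2 (by rw [hxc]; exact add_mem hz hd)
    obtain ⟨hsum, heq⟩ := S4.recenter ha hd hz
    rw [hf x hxb, hxc, heq, hsum.tsum_eq_zero_add, S4.reco_zero, pow_zero, mul_one, hf x₀ hx₀]
    congr 1
    rw [S4.ev, (S4.ev_summable G hs).tsum_eq_zero_add, hG0, map_zero, zero_mul, zero_add,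
      ← tsum_mul_left]
    refine tsum_congr fun k => ?_
    rw [hGs, hg, mul_pow, S4.T_pow]
    have e : S4.T K (α + β) * S4.T K (-α) * S4.T K (k * β) * S4.T K (((k + 1 : ℕ) : ℤ) * (-β)) = 1 := by
      rw [← S4.T_add, ← S4.T_add, ← S4.T_add, ← S4.T_zero]
      congr 1; push_cast; ring
    calc S4.reco a d (k + 1) * (x - x₀) ^ (k + 1)
        = (S4.T K (α + β) * S4.T K (-α) * S4.T K (k * β) * S4.T K (((k + 1 : ℕ) : ℤ) * (-β))) *
          (S4.reco a d (k + 1) * (x - x₀) ^ (k + 1)) := by rw [e, one_mul]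
      _ = _ := by ring
  obtain ⟨H, hH0, hGH, hHG⟩ := S4.ev_inverse G hG0 hG1
  have hinv : ∀ x ∈ ball x₀ (β + 1),
      x = x₀ + S4.T K β * S4.ev H (S4.T K (-(α + β)) * (f x - f x₀)) := by
    intro x hx
    obtain ⟨hs, he⟩ := hfx x hx
    rw [he, add_sub_cancel_left, S4.T_cancel', hHG _ hs, S4.T_cancel]
    ring
  refine ⟨⟨?_, ?_, ?_⟩, ?_⟩
  · intro x hx
    obtain ⟨hs, he⟩ := hfx x hx
    rw [S4.mem_ball, he, add_sub_cancel_left]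
    exact S4.VV_mul (S4.T_mem _) (S4.ev_mem G hG0 hs)
  · intro x hx y hy hxy
    rw [hinv x hx, hinv y hy, hxy]
  · intro w hw
    rw [S4.mem_ball] at hw
    have hs : S4.T K (-(α + β)) * (w - f x₀) ∈ S4.VV K 1 := by
      have h := S4.VV_mul (S4.T_mem (K := K) (-(α + β))) hw
      rwa [show -(α + β) + (α + β + 1) = 1 by ring] at h
    have hm := S4.ev_mem H hH0 hs
    have hx : x₀ + S4.T K β * S4.ev H (S4.T K (-(α + β)) * (w - f x₀)) ∈ ball x₀ (β + 1) := by
      rw [S4.mem_ball, add_sub_cancel_left]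
      exact S4.VV_mul (S4.T_mem _) hm
    refine ⟨_, hx, ?_⟩
    rw [(hfx _ hx).2, add_sub_cancel_left, S4.T_cancel', hGH _ hs, S4.T_cancel]
    ring
  · refine ⟨fun j => S4.T K β * S4.inc K (PowerSeries.coeff j H) * S4.T K (-(α + β)) ^ j, ?_, ?_⟩
    · intro N
      refine ⟨(N - β).toNat, fun j hj => ?_⟩
      have h1 := S4.VV_mul (S4.VV_mul (S4.T_mem (K := K) β) (S4.inc_mem (PowerSeries.coeff j H)))
        (S4.VV_pow (S4.T_mem (K := K) (-(α + β))) j)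
      rcases S4.mem_VV_iff.1 h1 with h | h
      · exact Or.inl h
      · right
        have hj' : N - β ≤ j := by omega
        calc N ≤ (β + 0 + j * (-(α + β))) + j * (α + β + 1) := by linarith
          _ ≤ _ := by gcongr
    · intro w hw x hx hxw
      subst hxw
      rw [S4.mem_ball] at hw
      have h := hinv x hx
      rw [S4.ev, ← tsum_mul_left] at h
      refine h.trans ?_
      congr 1
      refine tsum_congr fun j => ?_
      rw [mul_pow]; ring
end

section
/- Let K be a field of characteristic zero, and let f be a strictly analytic function on a ball B = c + t^β K[[t]] of K((t)), given by f(c+y) = ∑_{i∈ℕ} a_i y^i. Suppose there exists α ∈ ℤ such that ord(f'(x)) = α for every x ∈ B. Then for every x₀ ∈ B and all y, z ∈ x₀ + t^{β+1} K[[t]] with y ≠ z, one has ord(f(z) − f(y)) = α + ord(z − y). -/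
/-- The subgroup of Laurent series all of whose coefficients of index `< n` vanish. -/
def dsub (K : Type*) [Field K] (n : ℤ) : AddSubgroup (LaurentSeries K) where
  carrier := {x | ∀ k < n, x.coeff k = 0}
  zero_mem' := by intro k _; simp
  add_mem' := by
    intro x y hx hy k hk
    simp [hx k hk, hy k hk]
  neg_mem' := by
    intro x hx k hk
    simp [hx k hk]

theorem mem_dsub {K : Type*} [Field K] {n : ℤ} {x : LaurentSeries K} :
    x ∈ dsub K n ↔ ∀ k < n, x.coeff k = 0 := Iff.rfl

theorem mem_dsub_v {K : Type*} [Field K] {n : ℤ} {x : LaurentSeries K} :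
    x ∈ dsub K n ↔ Valued.v x ≤ WithZero.exp (-n) :=
  (LaurentSeries.valuation_le_iff_coeff_lt_eq_zero K).symm

theorem mem_dsub_ord {K : Type*} [Field K] {n : ℤ} {x : LaurentSeries K} :
    x ∈ dsub K n ↔ x = 0 ∨ n ≤ ord x := by
  by_cases h : x = 0
  · simp [h]
  · simp only [h, false_or]
    exact (HahnSeries.le_order_iff_forall h).symm

theorem dsub_mono {K : Type*} [Field K] {m n : ℤ} (h : m ≤ n) {x : LaurentSeries K}
    (hx : x ∈ dsub K n) : x ∈ dsub K m := fun k hk => hx k (by omega)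

theorem dsub_mul {K : Type*} [Field K] {m n : ℤ} {x y : LaurentSeries K}
    (hx : x ∈ dsub K m) (hy : y ∈ dsub K n) : x * y ∈ dsub K (m + n) := by
  rw [mem_dsub_v] at *
  rw [map_mul, neg_add, WithZero.exp_add]
  exact mul_le_mul' hx hy

theorem dsub_one {K : Type*} [Field K] : (1 : LaurentSeries K) ∈ dsub K 0 := by
  rw [mem_dsub_v]; simp

theorem dsub_pow {K : Type*} [Field K] {m : ℤ} {x : LaurentSeries K}
    (hx : x ∈ dsub K m) (i : ℕ) : x ^ i ∈ dsub K (i * m) := by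
  induction i with
  | zero => simpa using dsub_one
  | succ i ih =>
    rw [pow_succ]
    convert dsub_mul ih hx using 1
    push_cast; ring_nf

theorem dsub_natCast {K : Type*} [Field K] (i : ℕ) : (i : LaurentSeries K) ∈ dsub K 0 := by
  rw [← nsmul_one]
  exact AddSubgroup.nsmul_mem _ dsub_one i

theorem dsub_closed (K : Type*) [Field K] (n : ℤ) :
    IsClosed (dsub K n : Set (LaurentSeries K)) := by
  let _ : UniformSpace K := ⊥
  have : DiscreteTopology K := ⟨rfl⟩
  have : (dsub K n : Set (LaurentSeries K)) =
      ⋂ k : ℤ, ⋂ _ : k < n, (fun x : LaurentSeries K => x.coeff k) ⁻¹' {0} := by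
    ext x; simp [mem_dsub]
  rw [this]
  exact isClosed_iInter fun k => isClosed_iInter fun _ =>
    (isClosed_discrete _).preimage (LaurentSeries.uniformContinuous_coeff k).continuous

theorem dsub_open (K : Type*) [Field K] (n : ℤ) :
    IsOpen (dsub K n : Set (LaurentSeries K)) := by
  apply AddSubgroup.isOpen_of_mem_nhds (g := 0)
  have hne : Valued.v.restrict (HahnSeries.single n (1 : K) : LaurentSeries K) ≠ 0 := by
    intro h
    have h1 := MonoidWithZeroHom.ValueGroup₀.restrict₀_eq_zero_iff.1 h
    have h2 := (map_eq_zero (Valued.v : Valuation (LaurentSeries K) _)).1 h1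
    simp at h2
  refine Valued.mem_nhds_zero.2 ⟨Units.mk0 _ hne, fun x hx => ?_⟩
  have hx' : Valued.v x < Valued.v (HahnSeries.single n (1 : K) : LaurentSeries K) :=
    Valued.v.restrict_lt_iff.1 hx
  rw [LaurentSeries.valuation_single_zpow] at hx'
  exact mem_dsub_v.2 hx'.le

open MonoidWithZeroHom.ValueGroup₀ in
theorem dsub_nhds (K : Type*) [Field K] {U : Set (LaurentSeries K)}
    (hU : U ∈ nhds (0 : LaurentSeries K)) : ∃ N : ℤ, (dsub K N : Set (LaurentSeries K)) ⊆ U := by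
  obtain ⟨γ, hU₁⟩ := Valued.mem_nhds_zero.mp hU
  refine ⟨-(WithZero.log (embedding γ.1) - 1), fun x hx => hU₁ ?_⟩
  have hD : WithZero.exp (- (-(WithZero.log (embedding γ.1) - 1))) < embedding γ.1 := by
    rw [← WithZero.lt_log_iff_exp_lt (by simp)]
    simp
  have := lt_of_le_of_lt (mem_dsub_v.1 hx) hD
  rw [← Valued.v.restrict_lt_iff_lt_embedding] at this
  exact this

theorem dsub_summable {K : Type*} [Field K] (g : ℕ → LaurentSeries K)
    (h : ∀ N : ℤ, ∃ I : ℕ, ∀ i ≥ I, g i ∈ dsub K N) : Summable g := by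
  have : NonarchimedeanRing (LaurentSeries K) := by
    refine { is_nonarchimedean := fun U hU => ?_ }
    obtain ⟨N, hN⟩ := dsub_nhds K hU
    exact ⟨⟨dsub K N, dsub_open K N⟩, hN⟩
  apply NonarchimedeanAddGroup.summable_of_tendsto_cofinite_zero
  rw [Nat.cofinite_eq_atTop]
  intro U hU
  obtain ⟨N, hN⟩ := dsub_nhds K hU
  obtain ⟨I, hI⟩ := h N
  exact Filter.mem_map.2 (Filter.mem_atTop_sets.2 ⟨I, fun i hi => hN (hI i hi)⟩)

theorem dsub_tsum {K : Type*} [Field K] {N : ℤ} (g : ℕ → LaurentSeries K)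
    (h : ∀ i, g i ∈ dsub K N) : ∑' i, g i ∈ dsub K N := by
  by_cases hs : Summable g
  · exact (dsub_closed K N).mem_of_tendsto hs.hasSum
      (Filter.Eventually.of_forall fun s => AddSubgroup.sum_mem _ fun i _ => h i)
  · rw [tsum_eq_zero_of_not_summable hs]; exact AddSubgroup.zero_mem _

theorem taylor_dsub {K : Type*} [Field K] {β δ : ℤ} (hδ : β + 1 ≤ δ) {Y w : LaurentSeries K}
    (hY : Y ∈ dsub K β) (hw : w ∈ dsub K δ) (i : ℕ) :
    (Y + w) ^ (i + 1) - Y ^ (i + 1) - ((i : LaurentSeries K) + 1) * Y ^ i * w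
      ∈ dsub K (i * β + 1 + δ) := by
  induction i with
  | zero => simp
  | succ i ih =>
    have e : (Y + w) ^ (i + 1 + 1) - Y ^ (i + 1 + 1)
        - (((i + 1 : ℕ) : LaurentSeries K) + 1) * Y ^ (i + 1) * w
        = (Y + w) * ((Y + w) ^ (i + 1) - Y ^ (i + 1) - ((i : LaurentSeries K) + 1) * Y ^ i * w)
          + ((i + 1 : ℕ) : LaurentSeries K) * (w * w * Y ^ i) := by
      push_cast; ring
    rw [e]
    refine AddSubgroup.add_mem _ ?_ ?_
    · refine dsub_mono ?_ (dsub_mul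
        (AddSubgroup.add_mem _ hY (dsub_mono (by omega : β ≤ δ) hw)) ih)
      push_cast; linarith
    · refine dsub_mono ?_ (dsub_mul (dsub_natCast (i + 1))
        (dsub_mul (dsub_mul hw hw) (dsub_pow hY i)))
      push_cast; linarith

theorem coeff_bound {K : Type*} [Field K] [CharZero K] (β α : ℤ) (b : ℕ → LaurentSeries K)
    (hconv : ∀ N : ℤ, ∃ I : ℕ, ∀ i ≥ I, b i ∈ dsub K (N - i * β))
    (h : ∀ u ∈ dsub K β, ∑' i : ℕ, b i * u ^ i ∈ dsub K α) (i : ℕ) :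
    b i ∈ dsub K (α - i * β) := by
  obtain ⟨I, hI⟩ := hconv α
  by_cases hi : I ≤ i
  · exact hI i hi
  push Not at hi
  have key : ∀ n < α, (b i).coeff (n - i * β) = 0 := by
    intro n hn
    let p : Polynomial K := ∑ j ∈ Finset.range I,
      Polynomial.C ((b j).coeff (n - j * β)) * Polynomial.X ^ j
    have hp : p = 0 := by
      apply Polynomial.funext
      intro κ
      have hu : HahnSeries.single β κ ∈ dsub K β := by
        intro k hk
        exact HahnSeries.coeff_single_of_ne (by omega)
      have hs : Summable fun j => b j * (HahnSeries.single β κ : LaurentSeries K) ^ j := by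
        apply dsub_summable
        intro N
        obtain ⟨J, hJ⟩ := hconv N
        refine ⟨J, fun j hj => dsub_mono ?_ (dsub_mul (hJ j hj) (dsub_pow hu j))⟩
        omega
      have h1 := h _ hu
      rw [← hs.sum_add_tsum_nat_add I] at h1
      have h2 : ∑' j, b (j + I) * (HahnSeries.single β κ : LaurentSeries K) ^ (j + I)
          ∈ dsub K α := by
        apply dsub_tsum
        intro j
        refine dsub_mono ?_ (dsub_mul (hI (j + I) (by omega)) (dsub_pow hu (j + I)))
        omega
      have h3 := (AddSubgroup.add_mem_cancel_right _ h2).1 h1 n hn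
      rw [HahnSeries.coeff_sum] at h3
      simp only [HahnSeries.single_pow, HahnSeries.coeff_mul_single] at h3
      simpa [p, Polynomial.eval_finsetSum] using h3
    have := congrArg (fun q => Polynomial.coeff q i) hp
    simpa [p, Polynomial.finsetSum_coeff, Polynomial.coeff_X_pow, hi] using this
  intro k hk
  have := key (k + i * β) (by omega)
  simpa using this

/-- Let `f` be strictly analytic on the ball `B = c + t^β K[[t]]`, with derivative `f'`,
and suppose `f' x ≠ 0` and `ord (f' x) = α` for all `x ∈ B`.  Then for every `x₀ ∈ B` and
all `y, z ∈ x₀ + t^(β+1) K[[t]]` with `y ≠ z`, one has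
`ord (f z - f y) = α + ord (z - y)`. -/
theorem stmt5 {K : Type*} [Field K] [CharZero K]
    (c : LaurentSeries K) (β : ℤ) (a : ℕ → LaurentSeries K)
    (hconv : ∀ N : ℤ, ∃ I : ℕ, ∀ i ≥ I, a i = 0 ∨ N ≤ ord (a i) + (i : ℤ) * β)
    (f f' : LaurentSeries K → LaurentSeries K)
    (hf : ∀ x ∈ ball c β, f x = ∑' i : ℕ, a i * (x - c) ^ i)
    (hf' : ∀ x ∈ ball c β,
      f' x = ∑' i : ℕ, ((i : LaurentSeries K) + 1) * a (i + 1) * (x - c) ^ i)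
    (α : ℤ) (hα : ∀ x ∈ ball c β, f' x ≠ 0 ∧ ord (f' x) = α) :
    ∀ x₀ ∈ ball c β, ∀ y ∈ ball x₀ (β + 1), ∀ z ∈ ball x₀ (β + 1),
      y ≠ z → ord (f z - f y) = α + ord (z - y) := by
  intro x₀ hx₀ y hy z hz hyz
  have ball_iff : ∀ (c x : LaurentSeries K) (γ : ℤ), x ∈ ball c γ ↔ x - c ∈ dsub K γ := by
    intro c x γ
    rw [mem_dsub_ord, sub_eq_zero]
    rfl
  simp only [ball_iff] at *
  have hYc : y - c ∈ dsub K β := by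
    have := AddSubgroup.add_mem _ (dsub_mono (by omega : β ≤ β + 1) hy) hx₀
    simpa using this
  have hZc : z - c ∈ dsub K β := by
    have := AddSubgroup.add_mem _ (dsub_mono (by omega : β ≤ β + 1) hz) hx₀
    simpa using this
  have hw1 : z - y ∈ dsub K (β + 1) := by
    have := AddSubgroup.sub_mem _ hz hy
    simpa using this
  have hw0 : z - y ≠ 0 := sub_ne_zero.2 hyz.symm
  have hδ : β + 1 ≤ ord (z - y) := (mem_dsub_ord.1 hw1).resolve_left hw0
  have hw : z - y ∈ dsub K (ord (z - y)) := mem_dsub_ord.2 (Or.inr le_rfl)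
  have ha : ∀ N : ℤ, ∃ I : ℕ, ∀ i ≥ I, a i ∈ dsub K (N - i * β) := by
    intro N
    obtain ⟨I, hI⟩ := hconv N
    refine ⟨I, fun i hi => mem_dsub_ord.2 ((hI i hi).imp id ?_)⟩
    intro h; omega
  have hb : ∀ N : ℤ, ∃ I : ℕ, ∀ i ≥ I,
      ((i : LaurentSeries K) + 1) * a (i + 1) ∈ dsub K (N - i * β) := by
    intro N
    obtain ⟨I, hI⟩ := ha (N + β)
    refine ⟨I, fun i hi => ?_⟩
    have := dsub_mul (dsub_natCast (i + 1)) (hI (i + 1) (by omega))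
    push_cast at this
    refine dsub_mono ?_ this
    linarith
  have hsum : ∀ (g : ℕ → LaurentSeries K) (u : LaurentSeries K), u ∈ dsub K β →
      (∀ N : ℤ, ∃ I : ℕ, ∀ i ≥ I, g i ∈ dsub K (N - i * β)) →
      Summable fun i => g i * u ^ i := by
    intro g u hu hg
    apply dsub_summable
    intro N
    obtain ⟨J, hJ⟩ := hg N
    refine ⟨J, fun j hj => dsub_mono ?_ (dsub_mul (hJ j hj) (dsub_pow hu j))⟩
    omega
  have hbα : ∀ i : ℕ, ((i : LaurentSeries K) + 1) * a (i + 1) ∈ dsub K (α - i * β) := by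
    refine coeff_bound β α (fun i => ((i : LaurentSeries K) + 1) * a (i + 1)) hb ?_
    intro u hu
    have h1 := hf' (c + u) (by simpa using hu)
    have h2 := hα (c + u) (by simpa using hu)
    simp only [add_sub_cancel_left] at h1
    rw [← h1]
    exact mem_dsub_ord.2 (Or.inr h2.2.ge)
  have haα : ∀ i : ℕ, a (i + 1) ∈ dsub K (α - i * β) := by
    intro i k hk
    have := hbα i k hk
    have e : ((i : LaurentSeries K) + 1) * a (i + 1) = (i + 1) • a (i + 1) := by
      rw [nsmul_eq_mul]; push_cast; rfl
    rw [e, HahnSeries.coeff_nsmul] at this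
    simpa [Nat.cast_add_one_ne_zero] using this
  have hsz := hsum a _ hZc ha
  have hsy := hsum a _ hYc ha
  have hsd := hsum (fun i => ((i : LaurentSeries K) + 1) * a (i + 1)) _ hYc hb
  obtain ⟨hne, hord⟩ := hα y hYc
  have hR : f z - f y - f' y * (z - y) ∈ dsub K (α + 1 + ord (z - y)) := by
    rw [hf z hZc, hf y hYc, hf' y hYc, hsz.tsum_eq_zero_add, hsy.tsum_eq_zero_add,
      ← hsd.tsum_mul_right]
    simp only [pow_zero, add_sub_add_left_eq_sub]
    have hsz' := (summable_nat_add_iff 1).2 hsz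
    have hsy' := (summable_nat_add_iff 1).2 hsy
    rw [← hsz'.tsum_sub hsy', ← (hsz'.sub hsy').tsum_sub (hsd.mul_right (z - y))]
    apply dsub_tsum
    intro i
    have h1 := dsub_mul (haα i) (taylor_dsub hδ hYc hw i)
    have e : a (i + 1) * (z - c) ^ (i + 1) - a (i + 1) * (y - c) ^ (i + 1)
        - ((i : LaurentSeries K) + 1) * a (i + 1) * (y - c) ^ i * (z - y)
        = a (i + 1) * (((y - c) + (z - y)) ^ (i + 1) - (y - c) ^ (i + 1)
          - ((i : LaurentSeries K) + 1) * (y - c) ^ i * (z - y)) := by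
      rw [show (y - c) + (z - y) = z - c by ring]; ring
    rw [e]
    exact dsub_mono (by linarith) h1
  have hM : f' y * (z - y) ∈ dsub K (α + ord (z - y)) :=
    dsub_mul (mem_dsub_ord.2 (Or.inr hord.ge)) hw
  have hS : f z - f y ∈ dsub K (α + ord (z - y)) := by
    have := AddSubgroup.add_mem _ (dsub_mono (by omega) hR) hM
    simpa using this
  have hc : (f z - f y).coeff (α + ord (z - y)) ≠ 0 := by
    have h1 := hR (α + ord (z - y)) (by omega)
    rw [HahnSeries.coeff_sub, sub_eq_zero] at h1
    rw [h1]
    have h2 := HahnSeries.coeff_mul_order_add_order (f' y) (z - y)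
    have h3 : (f' y).order = α := hord
    rw [h3] at h2
    change (f' y * (z - y)).coeff (α + (z - y).order) ≠ 0
    rw [h2]
    exact mul_ne_zero (HahnSeries.leadingCoeff_ne_zero.2 hne)
      (HahnSeries.leadingCoeff_ne_zero.2 hw0)
  refine le_antisymm (HahnSeries.order_le_of_coeff_ne_zero hc) ?_
  refine (mem_dsub_ord.1 hS).resolve_left ?_
  intro h0
  rw [h0] at hc
  simp at hc
end

section
/- Let K be an infinite field, α ∈ ℤ, and η a nonzero element of K. Let (a_i)_{i∈ℕ} be a sequence in K((t)) such that for every N there exists I with: for all i ≥ I, a_i = 0 or ord(a_i) ≥ N; define f(y) = ∑_{i∈ℕ} a_i y^i for y ∈ K[[t]]. If ord(f(y)) = α and ac(f(y)) = η for every y ∈ K[[t]], then ord(a_0) = α and ac(a_0) = η, and for every i ≥ 1 with a_i ≠ 0 one has ord(a_i) ≥ α + 1. -/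
open Filter Topology in
theorem tendsto_aux {K : Type*} [Field K] (b : ℕ → LaurentSeries K)
    (h : ∀ N : ℤ, ∃ I : ℕ, ∀ i ≥ I, ∀ n < N, (b i).coeff n = 0) :
    Tendsto b atTop (𝓝 0) := by
  refine (Valued.hasBasis_nhds_zero (LaurentSeries K) (WithZero (Multiplicative ℤ))).tendsto_right_iff.2 fun γ _ => ?_
  set D := -(WithZero.log (MonoidWithZeroHom.ValueGroup₀.embedding γ.1) - 1) with hD₀
  have hD : WithZero.exp (-D) < MonoidWithZeroHom.ValueGroup₀.embedding γ.1 := by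
    rw [← WithZero.lt_log_iff_exp_lt (by simp), hD₀]
    simp
  obtain ⟨I, hI⟩ := h D
  filter_upwards [eventually_ge_atTop I] with i hi
  show Valued.v.restrict (b i) < γ.1
  rw [Valued.v.restrict_lt_iff_lt_embedding]
  exact lt_of_le_of_lt ((LaurentSeries.valuation_le_iff_coeff_lt_eq_zero K).2 (hI i hi)) hD

theorem coeff_tsum_aux {K : Type*} [Field K] (b : ℕ → LaurentSeries K)
    (h : ∀ N : ℤ, ∃ I : ℕ, ∀ i ≥ I, ∀ n < N, (b i).coeff n = 0) (n : ℤ) (I : ℕ)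
    (hI : ∀ i ≥ I, (b i).coeff n = 0) :
    (∑' i, b i).coeff n = ∑ i ∈ Finset.range I, (b i).coeff n := by
  have : NonarchimedeanRing (LaurentSeries K) :=
    (Valued.v : Valuation (LaurentSeries K) (WithZero (Multiplicative ℤ))).subgroups_basis.nonarchimedean
  have hs : Summable b := NonarchimedeanAddGroup.summable_of_tendsto_cofinite_zero
    (by rw [Nat.cofinite_eq_atTop]; exact tendsto_aux b h)
  let _ : UniformSpace K := ⊥
  have : DiscreteTopology K := ⟨rfl⟩
  have h1 := hs.hasSum.map (HahnSeries.coeff.addMonoidHom (R := K) n)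
    (LaurentSeries.uniformContinuous_coeff n).continuous
  refine h1.unique (hasSum_sum_of_ne_finset_zero ?_)
  intro i hi
  exact hI i (by simpa using hi)

/-- Let `K` be an infinite field, `α ∈ ℤ`, `η ∈ K` nonzero, and `(a_i)` a sequence in
`K((t))` with `ord (a_i) → ∞`; set `f(y) = ∑_i a_i yⁱ` for `y ∈ K[[t]]`.  If
`ord (f y) = α` and `ac (f y) = η` for every `y ∈ K[[t]]`, then `ord (a_0) = α`,
`ac (a_0) = η`, and `ord (a_i) ≥ α + 1` for every `i ≥ 1` with `a_i ≠ 0`. -/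
theorem stmt6 {K : Type*} [Field K] [Infinite K]
    (α : ℤ) (η : K) (hη : η ≠ 0) (a : ℕ → LaurentSeries K)
    (hconv : ∀ N : ℤ, ∃ I : ℕ, ∀ i ≥ I, a i = 0 ∨ N ≤ ord (a i))
    (f : LaurentSeries K → LaurentSeries K)
    (hf : ∀ y : LaurentSeries K, (y = 0 ∨ 0 ≤ ord y) → f y = ∑' i : ℕ, a i * y ^ i)
    (hval : ∀ y : LaurentSeries K, (y = 0 ∨ 0 ≤ ord y) → ord (f y) = α ∧ ac (f y) = η) :
    ord (a 0) = α ∧ ac (a 0) = η ∧ ∀ i : ℕ, 1 ≤ i → a i ≠ 0 → α + 1 ≤ ord (a i) := by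
  have hb : ∀ N : ℤ, ∃ I : ℕ, ∀ i ≥ I, ∀ n < N, (a i).coeff n = 0 := by
    intro N
    obtain ⟨I, hI⟩ := hconv N
    refine ⟨I, fun i hi n hn => ?_⟩
    rcases hI i hi with h | h
    · simp [h]
    · exact HahnSeries.coeff_eq_zero_of_lt_order (hn.trans_le h)
  have hc : ∀ (c : K) (i : ℕ) (n : ℤ),
      (a i * (HahnSeries.C c : LaurentSeries K) ^ i).coeff n = (a i).coeff n * c ^ i := by
    intro c i n
    rw [← map_pow, mul_comm, HahnSeries.C_mul_eq_smul, HahnSeries.coeff_smul, smul_eq_mul, mul_comm]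
  -- each coefficient is polynomial
  have key : ∀ (n : ℤ) (e : K), (∀ c : K, (f (HahnSeries.C c)).coeff n = e) →
      ∀ i, (a i).coeff n = if i = 0 then e else 0 := by
    intro n e he i
    obtain ⟨I, hI⟩ := hb (n + 1)
    have hp : (∑ i ∈ Finset.range I, Polynomial.monomial i ((a i).coeff n)) = Polynomial.C e := by
      apply Polynomial.funext
      intro c
      rw [Polynomial.eval_finsetSum, Polynomial.eval_C, ← he c,
        hf _ (Or.inr HahnSeries.order_C.ge), coeff_tsum_aux _ _ n I]
      · simp [hc, Polynomial.eval_monomial]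
      · intro i hi
        rw [hc, hI i hi n (by omega), zero_mul]
      · intro N
        obtain ⟨J, hJ⟩ := hb N
        exact ⟨J, fun i hi m hm => by rw [hc, hJ i hi m hm, zero_mul]⟩
    have := congrArg (fun p => Polynomial.coeff p i) hp
    simp only [Polynomial.finsetSum_coeff, Polynomial.coeff_monomial, Polynomial.coeff_C] at this
    rw [← this, Finset.sum_ite_eq' (Finset.range I) i]
    split_ifs with h
    · rfl
    · exact hI i (by simpa using h) n (by omega)
  have hv : ∀ c : K, ord (f (HahnSeries.C c)) = α ∧ ac (f (HahnSeries.C c)) = η :=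
    fun c => hval _ (Or.inr HahnSeries.order_C.ge)
  have hα := key α η (fun c => by
    have h := hv c
    unfold ac at h
    rw [← h.2, ← h.1]; rfl)
  have hlt : ∀ n < α, ∀ i, (a i).coeff n = 0 := by
    intro n hn i
    have := key n 0 (fun c => HahnSeries.coeff_eq_zero_of_lt_order (by
      have := (hv c).1
      unfold ord at this
      rwa [this])) i
    simpa using this
  have h0 : (a 0).coeff α = η := by simpa using hα 0
  have hne : a 0 ≠ 0 := by
    intro h
    rw [h] at h0
    exact hη (by simpa using h0.symm)
  have ho : (a 0).order = α := le_antisymm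
    (HahnSeries.order_le_of_coeff_ne_zero (by rw [h0]; exact hη))
    ((HahnSeries.le_order_iff_forall hne).2 fun n hn => hlt n hn 0)
  refine ⟨ho, by unfold ac; rw [ho, h0], fun i hi hai => ?_⟩
  refine (HahnSeries.le_order_iff_forall hai).2 fun n hn => ?_
  rcases (Int.lt_add_one_iff.1 hn).lt_or_eq with h | h
  · exact hlt n h i
  · rw [h, hα i, if_neg (by omega)]
end

section
/- Let K be a field, c ∈ K((t)), α ∈ ℤ, and ξ a nonzero element of K. Let Z = {x ∈ K((t)) : ord(x − c) = α and ac(x − c) = ξ} and let X = t·K[[t]] = {x ∈ K((t)) : x = 0 or ord(x) ≥ 1}. If Z ⊆ X, then α ≥ 0 and (c = 0 or ord(c) ≥ 0). If moreover ord(c) = 0, then α = 0 and Z = X. -/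
theorem memX_iff {K : Type*} [Field K] (x : LaurentSeries K) :
    (x = 0 ∨ 1 ≤ ord x) ↔ ∀ n : ℤ, n < 1 → x.coeff n = 0 := by
  constructor
  · rintro (rfl | h) n hn
    · simp
    · exact HahnSeries.coeff_eq_zero_of_lt_order (lt_of_lt_of_le hn h)
  · intro h
    by_cases hx : x = 0
    · exact Or.inl hx
    · right
      by_contra hlt
      exact HahnSeries.coeff_order_eq_zero.not.mpr hx (h _ (not_le.mp hlt))

theorem memZ_iff {K : Type*} [Field K] (y : LaurentSeries K) (α : ℤ) (ξ : K) (hξ : ξ ≠ 0) :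
    (ord y = α ∧ ac y = ξ) ↔ (∀ n : ℤ, n < α → y.coeff n = 0) ∧ y.coeff α = ξ := by
  constructor
  · rintro ⟨rfl, h⟩
    exact ⟨fun n hn => HahnSeries.coeff_eq_zero_of_lt_order hn, h⟩
  · rintro ⟨h1, h2⟩
    have hne : y.coeff α ≠ 0 := by rw [h2]; exact hξ
    have hy : y ≠ 0 := by rintro rfl; simp at hne
    have ho : y.order = α := by
      apply le_antisymm (HahnSeries.order_le_of_coeff_ne_zero hne)
      by_contra hlt
      exact HahnSeries.coeff_order_eq_zero.not.mpr hy (h1 _ (not_le.mp hlt))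
    refine ⟨ho, ?_⟩
    unfold ac
    rw [ho, h2]

theorem key {K : Type*} [Field K] (c : LaurentSeries K) (α : ℤ) (ξ : K) (hξ : ξ ≠ 0)
    (h : {x : LaurentSeries K | ord (x - c) = α ∧ ac (x - c) = ξ}
        ⊆ {x : LaurentSeries K | x = 0 ∨ 1 ≤ ord x}) :
    0 ≤ α ∧ ∀ n : ℤ, n < 1 → c.coeff n + (HahnSeries.single α ξ : LaurentSeries K).coeff n = 0 := by
  have h1 : ∀ n : ℤ, n < 1 →
      c.coeff n + (HahnSeries.single α ξ : LaurentSeries K).coeff n = 0 := by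
    have : c + HahnSeries.single α ξ ∈ {x : LaurentSeries K | x = 0 ∨ 1 ≤ ord x} := by
      apply h
      rw [Set.mem_setOf_eq, memZ_iff _ _ _ hξ, add_sub_cancel_left]
      exact ⟨fun n hn => HahnSeries.coeff_single_of_ne hn.ne, HahnSeries.coeff_single_same _ _⟩
    rw [Set.mem_setOf_eq, memX_iff] at this
    simpa using this
  refine ⟨?_, h1⟩
  by_contra hα
  have : c + (HahnSeries.single α ξ + HahnSeries.single (α + 1) 1)
      ∈ {x : LaurentSeries K | x = 0 ∨ 1 ≤ ord x} := by
    apply h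
    rw [Set.mem_setOf_eq, memZ_iff _ _ _ hξ, add_sub_cancel_left]
    constructor
    · intro n hn
      rw [HahnSeries.coeff_add, HahnSeries.coeff_single_of_ne hn.ne,
        HahnSeries.coeff_single_of_ne (by omega), add_zero]
    · rw [HahnSeries.coeff_add, HahnSeries.coeff_single_same,
        HahnSeries.coeff_single_of_ne (by omega), add_zero]
  rw [Set.mem_setOf_eq, memX_iff] at this
  have h2 := this (α + 1) (by omega)
  rw [HahnSeries.coeff_add, HahnSeries.coeff_add, ← add_assoc, h1 _ (by omega),
    HahnSeries.coeff_single_same, zero_add] at h2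
  exact one_ne_zero h2

/-- Let `Z = {x : ord (x - c) = α, ac (x - c) = ξ}` (with `ξ ≠ 0`) and
`X = t·K[[t]] = {x : x = 0 ∨ ord x ≥ 1}`.  If `Z ⊆ X` then `α ≥ 0` and
(`c = 0` or `ord c ≥ 0`); if moreover `c ≠ 0` and `ord c = 0`, then `α = 0` and
`Z = X`. -/
theorem stmt10 {K : Type*} [Field K] (c : LaurentSeries K) (α : ℤ) (ξ : K) (hξ : ξ ≠ 0) :
    ({x : LaurentSeries K | ord (x - c) = α ∧ ac (x - c) = ξ}
        ⊆ {x : LaurentSeries K | x = 0 ∨ 1 ≤ ord x} →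
      0 ≤ α ∧ (c = 0 ∨ 0 ≤ ord c)) ∧
    ({x : LaurentSeries K | ord (x - c) = α ∧ ac (x - c) = ξ}
        ⊆ {x : LaurentSeries K | x = 0 ∨ 1 ≤ ord x} →
      c ≠ 0 → ord c = 0 →
      α = 0 ∧
        {x : LaurentSeries K | ord (x - c) = α ∧ ac (x - c) = ξ}
          = {x : LaurentSeries K | x = 0 ∨ 1 ≤ ord x}) := by
  refine ⟨fun h => ?_, fun h hc hc0 => ?_⟩
  · obtain ⟨h0, h1⟩ := key c α ξ hξ h
    refine ⟨h0, or_iff_not_imp_left.mpr fun hc => ?_⟩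
    by_contra hlt
    have hlt' : c.order < 0 := not_le.mp hlt
    have h2 := h1 c.order (by omega)
    rw [HahnSeries.coeff_single_of_ne (by omega), add_zero] at h2
    exact HahnSeries.coeff_order_eq_zero.not.mpr hc h2
  · obtain ⟨h0, h1⟩ := key c α ξ hξ h
    have hc1 : c.coeff 0 ≠ 0 := by
      have := HahnSeries.coeff_order_eq_zero.not.mpr hc
      have hc0' : c.order = 0 := hc0
      rwa [hc0'] at this
    have h2 := h1 0 (by omega)
    have hα : α = 0 := by
      by_contra hne
      rw [HahnSeries.coeff_single_of_ne (Ne.symm hne), add_zero] at h2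
      exact hc1 h2
    subst hα
    refine ⟨rfl, Set.Subset.antisymm h ?_⟩
    intro x hx
    rw [Set.mem_setOf_eq, memX_iff] at hx
    rw [HahnSeries.coeff_single_same] at h2
    rw [Set.mem_setOf_eq, memZ_iff _ _ _ hξ]
    constructor
    · intro n hn
      have h3 := h1 n (by omega)
      rw [HahnSeries.coeff_single_of_ne hn.ne, add_zero] at h3
      rw [HahnSeries.coeff_sub, hx n (by omega), h3, sub_zero]
    · rw [HahnSeries.coeff_sub, hx 0 (by omega), zero_sub]
      exact neg_eq_of_add_eq_zero_right h2
end

section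
/- Let K be a field, α ∈ ℤ, and (a_i)_{i∈ℕ} a sequence in K((t)). The following are equivalent: (i) for every y ∈ t^α K[[t]], the family (a_i y^i)_{i∈ℕ} is summable in K((t)); (ii) ord(a_i) + iα tends to +∞ as i → ∞, in the sense that for every N there exists I such that for all i ≥ I, either a_i = 0 or ord(a_i) + iα ≥ N. -/
open Filter Topology WithZero MonoidWithZeroHom.ValueGroup₀ in
/-- Neighbourhoods of zero in `K((t))` are those containing some `t^D K[[t]]`. -/
lemma laurent_mem_nhds_zero {K : Type*} [Field K] (s : Set (LaurentSeries K)) :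
    s ∈ 𝓝 (0 : LaurentSeries K) ↔ ∃ D : ℤ, ∀ x : LaurentSeries K, (x = 0 ∨ D ≤ ord x) → x ∈ s := by
  have key : ∀ (D : ℤ) (x : LaurentSeries K),
      Valued.v x ≤ exp (-D) ↔ (x = 0 ∨ D ≤ ord x) := by
    intro D x
    rw [LaurentSeries.valuation_le_iff_coeff_lt_eq_zero]
    by_cases hx : x = 0
    · simp [hx]
    · simp only [hx, false_or]
      exact (HahnSeries.le_order_iff_forall hx).symm
  rw [Valued.mem_nhds_zero]
  constructor
  · rintro ⟨γ, hγ⟩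
    refine ⟨-(log (embedding γ.1) - 1), fun x hx => hγ ?_⟩
    have h1 := (key _ _).2 hx
    show Valued.v.restrict x < γ.1
    rw [Valuation.restrict_lt_iff_lt_embedding]
    refine lt_of_le_of_lt h1 ?_
    rw [← lt_log_iff_exp_lt (by simp)]
    simp
  · rintro ⟨D, hD⟩
    have hv : Valued.v (HahnSeries.single D (1 : K) : LaurentSeries K) = exp (-D) :=
      LaurentSeries.valuation_single_zpow K D
    have h0 : Valued.v.restrict (HahnSeries.single D (1 : K) : LaurentSeries K) ≠ 0 := by
      simp
    refine ⟨Units.mk0 _ h0, fun x hx => hD x ((key _ _).1 ?_)⟩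
    have hx' := Valued.v.restrict_lt_iff.mp hx
    rw [hv] at hx'
    exact hx'.le

open Filter Topology in
lemma laurent_nonarch (K : Type*) [Field K] : NonarchimedeanAddGroup (LaurentSeries K) where
  is_nonarchimedean := by
    intro U hU
    obtain ⟨γ, hγ⟩ := Valued.mem_nhds_zero.mp hU
    exact ⟨⟨Valuation.ltAddSubgroup Valued.v.restrict γ, Valued.isOpen_ball _ _⟩, hγ⟩

open Filter Topology in
lemma laurent_summable_iff {K : Type*} [Field K] (f : ℕ → LaurentSeries K) :
    Summable f ↔ ∀ N : ℤ, ∃ I : ℕ, ∀ i ≥ I, f i = 0 ∨ N ≤ ord (f i) := by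
  haveI := laurent_nonarch K
  have h := NonarchimedeanAddGroup.summable_iff_tendsto_cofinite_zero f
  rw [Nat.cofinite_eq_atTop] at h
  refine h.trans ⟨fun h N => ?_, fun h => ?_⟩
  · have h2 : {x : LaurentSeries K | x = 0 ∨ N ≤ ord x} ∈ 𝓝 (0 : LaurentSeries K) :=
      (laurent_mem_nhds_zero _).2 ⟨N, fun x hx => hx⟩
    exact eventually_atTop.1 (h h2)
  · intro s hs
    obtain ⟨D, hD⟩ := (laurent_mem_nhds_zero s).1 hs
    obtain ⟨I, hI⟩ := h D
    exact eventually_atTop.2 ⟨I, fun i hi => hD _ (hI i hi)⟩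

/-- For a field `K`, `α ∈ ℤ`, and a sequence `(a_i)` in `K((t))`, the family
`(a_i yⁱ)_{i ∈ ℕ}` is summable for every `y ∈ t^α K[[t]]` if and only if
`ord (a_i) + iα → +∞`, i.e. for every `N` there is `I` such that for all `i ≥ I`,
either `a_i = 0` or `ord (a_i) + iα ≥ N`. -/
theorem stmt11 {K : Type*} [Field K] (α : ℤ) (a : ℕ → LaurentSeries K) :
    (∀ y : LaurentSeries K, (y = 0 ∨ α ≤ ord y) → Summable (fun i : ℕ => a i * y ^ i)) ↔
    (∀ N : ℤ, ∃ I : ℕ, ∀ i ≥ I, a i = 0 ∨ N ≤ ord (a i) + (i : ℤ) * α) := by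
  simp only [laurent_summable_iff]
  constructor
  · intro h N
    have hne : (HahnSeries.single α (1 : K) : LaurentSeries K) ≠ 0 := by simp
    have ho : (HahnSeries.single α (1 : K) : LaurentSeries K).order = α :=
      HahnSeries.order_single one_ne_zero
    obtain ⟨I, hI⟩ := h (HahnSeries.single α 1) (Or.inr ho.ge) N
    refine ⟨I, fun i hi => ?_⟩
    by_cases ha : a i = 0
    · exact Or.inl ha
    right
    rcases hI i hi with h0 | h1
    · exact absurd h0 (mul_ne_zero ha (pow_ne_zero i hne))
    · unfold ord at h1 ⊢
      rw [HahnSeries.order_mul ha (pow_ne_zero i hne), HahnSeries.order_pow, ho,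
        nsmul_eq_mul] at h1
      exact h1
  · intro h y hy N
    obtain ⟨I, hI⟩ := h N
    refine ⟨I, fun i hi => ?_⟩
    by_cases h0 : a i * y ^ i = 0
    · exact Or.inl h0
    right
    have ha := left_ne_zero_of_mul h0
    have hyi := right_ne_zero_of_mul h0
    have h1 := (hI i hi).resolve_left ha
    have h2 : (i : ℤ) * α ≤ i * y.order := by
      rcases hy with rfl | hy
      · rcases Nat.eq_zero_or_pos i with rfl | hpos
        · simp
        · exact absurd (zero_pow hpos.ne') hyi
      · exact mul_le_mul_of_nonneg_left hy (Int.natCast_nonneg i)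
    unfold ord at h1 ⊢
    rw [HahnSeries.order_mul ha hyi, HahnSeries.order_pow, nsmul_eq_mul]
    exact h1.trans (by gcongr)
end
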